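/- Let E = E(2,M,p) be a planar fractal percolation with integer M ≥ 2 and 0 < p ≤ 1. Then for ℙ(·|E ≠ ∅)-almost every realization, for ALL straight lines ℓ that are not parallel to the coordinate axes, the orthogonal projection proj_ℓ(E) of E onto ℓ satisfies dim_H(proj_ℓ(E)) = min{1, dim_H(E)}, where dim_H denotes Hausdorff dimension. -/

import Mathlib

open MeasureTheory Set ENNReal ProbabilityTheory Real

noncomputable section

/-- The alphabet indexing the `M^d` subcubes of a cube in `[0,1]^d`. -/
abbrev Alpha (d M : ℕ) : Type := Fin d → Fin M

/-- Finite nonempty words over the alphabet; they index `M`-adic cubes. -/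
abbrev Word (d M : ℕ) : Type := {w : List (Alpha d M) // w ≠ []}

/-- The sample space: `{0,1}`-labelings of all finite nonempty words. -/
abbrev PercSpace (d M : ℕ) : Type := Word d M → Bool

/-- `P` is the product measure making the labels i.i.d. Bernoulli(`p`). -/
def IsBernoulliPerc (d M : ℕ) (p : ℝ) (P : Measure (PercSpace d M)) : Prop :=
  IsProbabilityMeasure P ∧
    ∀ (S : Finset (Word d M)) (b : Word d M → Bool),
      P {ω | ∀ w ∈ S, ω w = b w} =
        ∏ w ∈ S, if b w then ENNReal.ofReal p else ENNReal.ofReal (1 - p)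

/-- A level-`w.length` cube is retained iff its word and every nonempty prefix
of its word carry label 1. -/
def Retained (d M : ℕ) (ω : PercSpace d M) (w : List (Alpha d M)) : Prop :=
  ∀ (u : List (Alpha d M)) (hu : u ≠ []), u <+: w → ω ⟨u, hu⟩ = true

/-- The `i`-th coordinate of the lower-left corner of the cube indexed by `w`. -/
def wordBase (d M : ℕ) (w : List (Alpha d M)) (i : Fin d) : ℝ :=
  ∑ j : Fin w.length, ((w.get j) i : ℝ) * (M : ℝ) ^ (-(j : ℤ) - 1)

/-- The closed `M`-adic cube of level `w.length` indexed by the word `w`. -/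
def wordCube (d M : ℕ) (w : List (Alpha d M)) : Set (EuclideanSpace ℝ (Fin d)) :=
  {x | ∀ i, wordBase d M w i ≤ x i ∧ x i ≤ wordBase d M w i + (M : ℝ) ^ (-(w.length : ℤ))}

/-- `E_n`, the union of the retained level-`n` cubes. -/
def approx (d M : ℕ) (ω : PercSpace d M) (n : ℕ) : Set (EuclideanSpace ℝ (Fin d)) :=
  ⋃ w ∈ {w : List (Alpha d M) | w.length = n ∧ Retained d M ω w}, wordCube d M w

/-- The fractal percolation set `E = ⋂_{n ≥ 1} E_n`. -/
def percLimit (d M : ℕ) (ω : PercSpace d M) : Set (EuclideanSpace ℝ (Fin d)) :=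
  ⋂ n ∈ {n : ℕ | 1 ≤ n}, approx d M ω n

/-- The segment cut out of `[0,1]²` by the line through `z` with direction `v`. -/
def lineSeg (z v : EuclideanSpace ℝ (Fin 2)) : Set (EuclideanSpace ℝ (Fin 2)) :=
  {x | (∃ t : ℝ, x = z + t • v) ∧ ∀ i, 0 ≤ x i ∧ x i ≤ 1}

/-- Orthogonal projection of the plane onto the line through `z` with direction `v`. -/
def lineProj (z v : EuclideanSpace ℝ (Fin 2)) (x : EuclideanSpace ℝ (Fin 2)) :
    EuclideanSpace ℝ (Fin 2) :=
  z + ((@inner ℝ _ _ (x - z) v) / (@inner ℝ _ _ v v)) • v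

/-- Integer coordinates of the lower-left corner of a cube. -/
def cIdx (M : ℕ) (i : Fin 2) : List (Alpha 2 M) → ℕ
  | [] => 0
  | a :: w => (a i : ℕ) * M ^ w.length + cIdx M i w

lemma wordBase_cons (M : ℕ) (a : Alpha 2 M) (w : List (Alpha 2 M)) (i : Fin 2) (hM : 2 ≤ M) :
    wordBase 2 M (a :: w) i = (a i : ℝ) / M + wordBase 2 M w i / M := by
  have hM0 : (M : ℝ) ≠ 0 := by positivity
  simp only [wordBase]
  have h := Fin.sum_univ_succ (n := w.length)
    (fun j => ((((a :: w).get j) i : ℕ) : ℝ) * (M : ℝ) ^ (-((j : ℕ) : ℤ) - 1))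
  refine h.trans ?_
  congr 1
  · rw [List.get_eq_getElem]
    simp only [Fin.val_zero, List.getElem_cons_zero]
    simp only [Fin.val_zero, Nat.cast_zero, neg_zero, zero_sub, zpow_neg_one, div_eq_mul_inv]
    rfl
  · rw [Finset.sum_div]
    apply Finset.sum_congr rfl
    intro j _
    simp only [List.get_eq_getElem, Fin.val_succ, List.getElem_cons_succ]
    rw [mul_div_assoc]
    congr 1
    rw [eq_div_iff hM0, ← zpow_add_one₀ hM0]
    congr 1
    push_cast
    ring

lemma wordBase_eq (M : ℕ) (hM : 2 ≤ M) (w : List (Alpha 2 M)) (i : Fin 2) :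
    wordBase 2 M w i = (cIdx M i w : ℝ) / (M : ℝ) ^ w.length := by
  have hM0 : (M : ℝ) ≠ 0 := by positivity
  induction w with
  | nil => simp [wordBase, cIdx]
  | cons a w ih =>
    rw [wordBase_cons _ _ _ _ hM, ih, cIdx, List.length_cons]
    push_cast
    rw [pow_succ]
    field_simp

lemma mem_wordCube (M : ℕ) (hM : 2 ≤ M) (w : List (Alpha 2 M)) (x : EuclideanSpace ℝ (Fin 2)) :
    x ∈ wordCube 2 M w ↔ ∀ i, (cIdx M i w : ℝ) / (M : ℝ) ^ w.length ≤ x i ∧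
      x i ≤ ((cIdx M i w : ℝ) + 1) / (M : ℝ) ^ w.length := by
  simp only [wordCube, mem_ofPred_eq, wordBase_eq M hM, zpow_neg, zpow_natCast, add_div, one_div]

lemma cIdx_append (M : ℕ) (i : Fin 2) (u v : List (Alpha 2 M)) :
    cIdx M i (u ++ v) = cIdx M i u * M ^ v.length + cIdx M i v := by
  induction u with
  | nil => simp [cIdx]
  | cons a u ih =>
    rw [List.cons_append, cIdx, cIdx, ih, List.length_append]
    ring

lemma cIdx_lt (M : ℕ) (i : Fin 2) (v : List (Alpha 2 M)) : cIdx M i v < M ^ v.length := by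
  induction v with
  | nil => simp [cIdx]
  | cons a u ih =>
    rw [cIdx, List.length_cons, pow_succ]
    have := (a i).2
    nlinarith [Nat.zero_le (M ^ u.length)]

lemma cIdx_inj (M : ℕ) (hM : 2 ≤ M) : ∀ (u v : List (Alpha 2 M)), u.length = v.length →
    (∀ i, cIdx M i u = cIdx M i v) → u = v := by
  intro u
  induction u with
  | nil =>
    intro v h _
    exact (List.length_eq_zero_iff.1 h.symm).symm
  | cons a u ih =>
    intro v h hc
    cases v with
    | nil => simp at h
    | cons b v =>
      have hl : u.length = v.length := by simpa using h
      have hh : ∀ i, (a i : ℕ) = b i ∧ cIdx M i u = cIdx M i v := by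
        intro i
        have h1 := hc i
        simp only [cIdx, hl] at h1
        have h2 := cIdx_lt M i u
        have h3 := cIdx_lt M i v
        rw [hl] at h2
        have hpos : 0 < M ^ v.length := by positivity
        have h4 : (a i : ℕ) = b i := by
          have := congrArg (fun x => x / M ^ v.length) h1
          simpa [Nat.add_div_of_dvd_right, Nat.mul_div_cancel _ hpos, Nat.div_eq_of_lt h2,
            Nat.div_eq_of_lt h3] using this
        refine ⟨h4, ?_⟩
        rw [h4] at h1
        omega
      rw [ih v hl fun i => (hh i).2]
      congr 1
      funext i
      exact Fin.ext (hh i).1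

/-- All words of length `m`. -/
def wordsLen (M m : ℕ) : Finset (List (Alpha 2 M)) :=
  (Finset.univ : Finset (List.Vector (Alpha 2 M) m)).map ⟨List.Vector.toList, List.Vector.toList_injective⟩

@[simp] lemma mem_wordsLen (M m : ℕ) (w : List (Alpha 2 M)) :
    w ∈ wordsLen M m ↔ w.length = m := by
  simp only [wordsLen, Finset.mem_map, Finset.mem_univ, true_and, Function.Embedding.coeFn_mk]
  constructor
  · rintro ⟨v, rfl⟩
    exact v.toList_length
  · intro h
    exact ⟨⟨w, h⟩, rfl⟩

lemma card_wordsLen (M m : ℕ) : (wordsLen M m).card = (M ^ 2) ^ m := by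
  rw [wordsLen, Finset.card_map, Finset.card_univ, card_vector]
  simp

lemma wordCube_append (M : ℕ) (hM : 2 ≤ M) (u v : List (Alpha 2 M)) :
    wordCube 2 M (u ++ v) ⊆ wordCube 2 M u := by
  intro x hx
  rw [mem_wordCube M hM] at hx ⊢
  intro i
  have hM0 : (0 : ℝ) < M := by positivity
  obtain ⟨h1, h2⟩ := hx i
  rw [cIdx_append, List.length_append, pow_add] at h1 h2
  have h3 : (cIdx M i v : ℝ) + 1 ≤ (M : ℝ) ^ v.length := by exact_mod_cast cIdx_lt M i v
  have h0 : (0 : ℝ) ≤ cIdx M i v := by positivity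
  have hu : (0 : ℝ) < (M : ℝ) ^ u.length := by positivity
  have hv : (0 : ℝ) < (M : ℝ) ^ v.length := by positivity
  push_cast at h1 h2
  rw [div_le_iff₀ (by positivity)] at h1
  rw [le_div_iff₀ (by positivity)] at h2
  rw [div_le_iff₀ hu, le_div_iff₀ hu]
  constructor
  · by_contra! h
    nlinarith
  · by_contra! h
    nlinarith

lemma retained_prefix {M : ℕ} {ω : PercSpace 2 M} {u w : List (Alpha 2 M)} (h : u <+: w)
    (hw : Retained 2 M ω w) : Retained 2 M ω u :=
  fun x hx hxu => hw x hx (hxu.trans h)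

lemma approx_anti (M : ℕ) (hM : 2 ≤ M) (ω : PercSpace 2 M) {n m : ℕ} (h : n ≤ m) :
    approx 2 M ω m ⊆ approx 2 M ω n := by
  intro x hx
  simp only [approx, mem_iUnion, mem_ofPred_eq, exists_prop] at hx ⊢
  obtain ⟨w, ⟨hl, hr⟩, hx⟩ := hx
  refine ⟨w.take n, ⟨by simp [hl, h], retained_prefix (List.take_prefix n w) hr⟩, ?_⟩
  apply wordCube_append M hM (w.take n) (w.drop n)
  rwa [List.take_append_drop]

lemma retained_cons {M : ℕ} {ω : PercSpace 2 M} {a : Alpha 2 M} {w : List (Alpha 2 M)} :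
    Retained 2 M ω (a :: w) ↔ ω ⟨[a], by simp⟩ = true ∧
      Retained 2 M (fun u => ω ⟨a :: u.1, by simp⟩) w := by
  constructor
  · intro h
    refine ⟨h [a] (by simp) (by simp), ?_⟩
    intro u hu huw
    exact h (a :: u) (by simp) (by simpa using huw)
  · rintro ⟨h1, h2⟩ u hu huw
    cases u with
    | nil => exact absurd rfl hu
    | cons b u =>
      rw [List.cons_prefix_cons] at huw
      obtain ⟨rfl, huw⟩ := huw
      cases u with
      | nil => exact h1
      | cons c u => exact h2 (c :: u) (by simp) huw

/-- The labelling seen from the first-level cube `i`. -/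
def shiftPerc (M : ℕ) (i : Alpha 2 M) (ω : PercSpace 2 M) : PercSpace 2 M :=
  fun u => ω ⟨i :: u.1, by simp⟩

/-- The Bernoulli measure on `Bool`. -/
def bernM (p : ℝ) : Measure Bool :=
  ENNReal.ofReal p • Measure.dirac true + ENNReal.ofReal (1 - p) • Measure.dirac false

lemma bernM_prob (p : ℝ) (hp0 : 0 < p) (hp1 : p ≤ 1) : IsProbabilityMeasure (bernM p) := by
  constructor
  simp only [bernM, Measure.add_apply, Measure.smul_apply, measure_univ, smul_eq_mul, mul_one]
  rw [← ENNReal.ofReal_add hp0.le (by linarith)]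
  simp

lemma bernM_singleton (p : ℝ) (b : Bool) :
    bernM p {b} = if b then ENNReal.ofReal p else ENNReal.ofReal (1 - p) := by
  cases b <;> simp [bernM]

lemma perc_eq_infinitePi (M : ℕ) (p : ℝ) (hp0 : 0 < p) (hp1 : p ≤ 1)
    (P : Measure (PercSpace 2 M)) (hP : IsBernoulliPerc 2 M p P) :
    haveI := bernM_prob p hp0 hp1
    P = Measure.infinitePi (fun _ : Word 2 M => bernM p) := by
  have := bernM_prob p hp0 hp1
  have := hP.1
  apply Measure.eq_infinitePi
  intro s t ht
  have key : P.map s.restrict = Measure.pi (fun _ : s => bernM p) := by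
    apply Measure.ext_of_singleton
    intro x
    rw [Measure.map_apply (by fun_prop) (measurableSet_singleton _), Measure.pi_singleton]
    have := hP.2 s (fun w => if h : w ∈ s then x ⟨w, h⟩ else true)
    have h2 : (s.restrict : PercSpace 2 M → (s → Bool)) ⁻¹' {x} = {ω : PercSpace 2 M | ∀ w ∈ s, ω w = (fun w => if h : w ∈ s then x ⟨w, h⟩ else true) w} := by
      ext ω
      simp only [mem_preimage, mem_singleton_iff, funext_iff, Finset.restrict, mem_ofPred_eq]
      constructor
      · intro h w hw
        simpa [hw] using h ⟨w, hw⟩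
      · intro h w
        simpa using h w.1 w.2
    rw [h2, this, ← Finset.prod_coe_sort]
    apply Finset.prod_congr rfl
    intro w _
    simp [bernM_singleton]
  have h3 : Set.pi (s : Set (Word 2 M)) t = s.restrict ⁻¹' (Set.univ.pi (fun w : s => t w)) := by
    ext ω
    simp [Set.mem_pi]
  rw [h3, ← Measure.map_apply (by fun_prop) (MeasurableSet.univ_pi fun w => ht _), key,
    Measure.pi_pi]
  exact Finset.prod_coe_sort s (fun w => bernM p (t w))

lemma infinitePi_option {κ : Type*} (μ : Measure Bool) [IsProbabilityMeasure μ] :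
    (Measure.infinitePi (fun _ : Option κ => μ)).map (fun x => (x none, fun k => x (some k)))
      = μ.prod (Measure.infinitePi (fun _ : κ => μ)) := by
  let g : Bool × (κ → Bool) → (Option κ → Bool) := fun y o => o.elim y.1 y.2
  have hg : Measurable g := by
    rw [measurable_pi_iff]
    rintro (_ | k)
    · exact measurable_fst
    · exact (measurable_pi_apply k).comp measurable_snd
  have key : (μ.prod (Measure.infinitePi (fun _ : κ => μ))).map g
      = Measure.infinitePi (fun _ : Option κ => μ) := by
    apply Measure.eq_infinitePi
    intro s t ht
    classical
    rw [Measure.map_apply hg (MeasurableSet.pi s.countable_toSet fun i _ => ht i)]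
    have h1 : g ⁻¹' (Set.pi (s : Set (Option κ)) t) =
        (if none ∈ s then t none else univ) ×ˢ
          (Set.pi (s.eraseNone : Set κ) (fun k => t (some k))) := by
      ext ⟨e, y⟩
      simp only [mem_preimage, Set.mem_pi, Finset.mem_coe, mem_prod, Finset.mem_eraseNone]
      constructor
      · intro h
        refine ⟨?_, fun k hk => h _ hk⟩
        split_ifs with hn
        · exact h none hn
        · trivial
      · rintro ⟨h1, h2⟩ (_ | k) hk
        · rw [if_pos hk] at h1; exact h1
        · exact h2 k hk
    rw [h1, Measure.prod_prod, Measure.infinitePi_pi _ (fun i _ => ht _),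
      Finset.prod_eraseNone (fun k => μ (t (some k)))]
    by_cases hn : none ∈ s
    · rw [if_pos hn, ← Finset.mul_prod_erase _ _ hn, ← Finset.mul_prod_erase _ _ hn]
      rw [Option.elim'_none, one_mul]
      congr 1
      apply Finset.prod_congr rfl
      rintro (_ | k) hk
      · simp at hk
      · rfl
    · rw [if_neg hn]
      simp only [measure_univ, one_mul]
      apply Finset.prod_congr rfl
      rintro (_ | k) hk
      · exact absurd hk hn
      · rfl
  rw [← key, Measure.map_map (by fun_prop) hg]
  have : ((fun x : Option κ → Bool => (x none, fun k => x (some k))) ∘ g) = id := by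
    ext y <;> rfl
  rw [this, Measure.map_id]

/-- The injection describing the first-level decomposition of words. -/
def wordSplit (M : ℕ) (x : Alpha 2 M × Option (Word 2 M)) : Word 2 M :=
  ⟨x.1 :: (x.2.elim [] (fun u => u.1)), by simp⟩

lemma wordSplit_inj (M : ℕ) : Function.Injective (wordSplit M) := by
  rintro ⟨i, _ | u⟩ ⟨j, _ | v⟩ h
  · simp_all [wordSplit]
  · have := v.2
    simp_all [wordSplit]
  · have := u.2
    simp_all [wordSplit]
  · simp only [wordSplit, Option.elim_some, Subtype.mk.injEq, List.cons.injEq] at h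
    rw [h.1, Subtype.ext h.2]

lemma perc_selfsimilar (M : ℕ) (p : ℝ) (hp0 : 0 < p) (hp1 : p ≤ 1)
    (P : Measure (PercSpace 2 M)) (hP : IsBernoulliPerc 2 M p P)
    (B : Set (PercSpace 2 M)) (hB : MeasurableSet B) :
    P {ω | ∀ i : Alpha 2 M, ω ⟨[i], by simp⟩ = true → shiftPerc M i ω ∈ B}
      = (ENNReal.ofReal (1 - p) + ENNReal.ofReal p * P B) ^ (M ^ 2) := by
  have := bernM_prob p hp0 hp1
  have hPe := perc_eq_infinitePi M p hp0 hp1 P hP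
  have h1 : P.map (fun ω (x : Alpha 2 M × Option (Word 2 M)) => ω (wordSplit M x))
      = Measure.infinitePi (fun _ => bernM p) := by
    rw [hPe]
    exact Measure.map_infinitePi_infinitePi_of_inj (P := fun _ => bernM p) (wordSplit_inj M)
  have h2 := Measure.infinitePi_map_curry (ι := Alpha 2 M) (κ := Option (Word 2 M))
    (fun _ _ => bernM p)
  rw [← h1, Measure.map_map (by fun_prop) (by fun_prop)] at h2
  set C : Set (Option (Word 2 M) → Bool) := (fun x => (x none, fun k => x (some k))) ⁻¹'
    (({false} ×ˢ univ) ∪ ({true} ×ˢ B)) with hC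
  have hm0 : MeasurableSet (({false} ×ˢ univ) ∪ ({true} ×ˢ B) : Set (Bool × PercSpace 2 M)) :=
    ((measurableSet_singleton _).prod MeasurableSet.univ).union
      ((measurableSet_singleton _).prod hB)
  have hCm : MeasurableSet C := by
    apply MeasurableSet.preimage hm0
    fun_prop
  have h3 : {ω : PercSpace 2 M | ∀ i : Alpha 2 M, ω ⟨[i], by simp⟩ = true → shiftPerc M i ω ∈ B}
      = ((MeasurableEquiv.curry (Alpha 2 M) (Option (Word 2 M)) Bool) ∘
        (fun ω (x : Alpha 2 M × Option (Word 2 M)) => ω (wordSplit M x))) ⁻¹'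
          (Set.pi ((Finset.univ : Finset (Alpha 2 M)) : Set (Alpha 2 M)) (fun _ => C)) := by
    ext ω
    simp only [mem_ofPred_eq, mem_preimage, Set.mem_pi, Finset.coe_univ, mem_univ, true_imp_iff, hC]
    apply forall_congr'
    intro i
    change _ ↔ ((ω ⟨[i], by simp⟩, shiftPerc M i ω) ∈ _)
    cases ω ⟨[i], by simp⟩ <;> simp
  rw [h3, ← Measure.map_apply (by fun_prop) (MeasurableSet.pi (Finset.countable_toSet _) fun _ _ => hCm),
    h2, Measure.infinitePi_pi _ (fun _ _ => hCm), Finset.prod_const]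
  have h4 : Measure.infinitePi (fun _ : Option (Word 2 M) => bernM p) C
      = ENNReal.ofReal (1 - p) + ENNReal.ofReal p * P B := by
    rw [hC, ← Measure.map_apply (by fun_prop) hm0, infinitePi_option, measure_union _
      ((measurableSet_singleton _).prod hB), Measure.prod_prod, Measure.prod_prod,
      bernM_singleton, bernM_singleton, hPe]
    · simp
    · rw [Set.disjoint_left]
      rintro ⟨e, y⟩ h h'
      simp_all
  rw [h4]
  congr 1
  simp

/-- The nonempty prefixes of a word. -/
def prefW {M : ℕ} (w : List (Alpha 2 M)) : Finset (Word 2 M) :=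
  (Finset.univ : Finset (Fin w.length)).image (fun j : Fin w.length => ⟨w.take ((j : ℕ) + 1), by
    have := j.2
    intro h
    have h2 := congrArg List.length h
    rw [List.length_take, List.length_nil] at h2
    omega⟩)

lemma mem_prefW {M : ℕ} (w : List (Alpha 2 M)) (u : Word 2 M) : u ∈ prefW w ↔ u.1 <+: w := by
  simp only [prefW, Finset.mem_image, Finset.mem_univ, true_and]
  constructor
  · rintro ⟨j, rfl⟩
    exact List.take_prefix _ _
  · intro h
    have h1 := h.length_le
    have h2 : 0 < u.1.length := List.length_pos_iff.2 u.2
    refine ⟨⟨u.1.length - 1, by omega⟩, ?_⟩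
    apply Subtype.ext
    simp only
    rw [Nat.sub_add_cancel h2]
    exact (List.prefix_iff_eq_take.1 h).symm

lemma retained_iff {M : ℕ} (ω : PercSpace 2 M) (w : List (Alpha 2 M)) :
    Retained 2 M ω w ↔ ∀ u ∈ prefW w, ω u = true := by
  constructor
  · intro h u hu
    exact h u.1 u.2 ((mem_prefW w u).1 hu)
  · intro h u hu huw
    exact h ⟨u, hu⟩ ((mem_prefW w _).2 huw)

/-- The event that all words of a list are retained. -/
def retSet {M : ℕ} (L : List (List (Alpha 2 M))) : Set (PercSpace 2 M) :=
  {ω | ∀ w ∈ L, Retained 2 M ω w}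

/-- Union of the prefix sets. -/
def prefL {M : ℕ} (L : List (List (Alpha 2 M))) : Finset (Word 2 M) :=
  L.toFinset.biUnion prefW

lemma retSet_eq {M : ℕ} (L : List (List (Alpha 2 M))) :
    retSet L = {ω | ∀ u ∈ prefL L, ω u = true} := by
  ext ω
  simp only [retSet, prefL, mem_ofPred_eq, retained_iff, Finset.mem_biUnion, List.mem_toFinset]
  constructor
  · rintro h u ⟨w, hw, hu⟩
    exact h w hw u hu
  · intro h w hw u hu
    exact h u ⟨w, hw, hu⟩

lemma measurableSet_retSet {M : ℕ} (L : List (List (Alpha 2 M))) : MeasurableSet (retSet L) := by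
  rw [retSet_eq]
  have : {ω : PercSpace 2 M | ∀ u ∈ prefL L, ω u = true} =
      ⋂ u ∈ prefL L, (fun ω : PercSpace 2 M => ω u) ⁻¹' {true} := by
    ext ω
    simp
  rw [this]
  exact Finset.measurableSet_biInter _ fun u _ =>
    (measurable_pi_apply u) (measurableSet_singleton _)

lemma measure_retSet {M : ℕ} {p : ℝ} {P : Measure (PercSpace 2 M)} (hP : IsBernoulliPerc 2 M p P)
    (L : List (List (Alpha 2 M))) : P (retSet L) = ENNReal.ofReal p ^ (prefL L).card := by
  rw [retSet_eq, hP.2 (prefL L) (fun _ => true)]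
  simp

lemma card_prefW {M : ℕ} (w : List (Alpha 2 M)) : (prefW w).card = w.length := by
  rw [prefW, Finset.card_image_of_injective]
  · simp
  · intro i j h
    have h2 := congrArg (fun x : Word 2 M => x.1.length) h
    simp only [List.length_take] at h2
    have := i.2
    have := j.2
    apply Fin.ext
    omega

lemma measure_retSet_singleton {M : ℕ} {p : ℝ} {P : Measure (PercSpace 2 M)}
    (hP : IsBernoulliPerc 2 M p P)
    (w : List (Alpha 2 M)) : P (retSet [w]) = ENNReal.ofReal p ^ w.length := by
  rw [measure_retSet hP, ← card_prefW]
  simp [prefL]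

/-- Branching weight of the word `w` relative to the word `v`. -/
def brW {M : ℕ} (q : ℝ≥0∞) (m : ℕ) (v w : List (Alpha 2 M)) : ℝ≥0∞ :=
  ∑ j ∈ Finset.range (m + 1), if w.take j = v.take j then q ^ (m - j) else 0

lemma pow_card_sdiff_le {M : ℕ} (q : ℝ≥0∞) (hq : q ≤ 1) (m : ℕ) (L : List (List (Alpha 2 M)))
    (w : List (Alpha 2 M)) (hw : w.length = m) :
    q ^ (prefW w \ prefL L).card ≤ q ^ m + (L.map (fun v => brW q m v w)).sum := by
  classical
  let S := (Finset.range (m + 1)).filter (fun j => j = 0 ∨ ∃ v ∈ L, w.take j = v.take j)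
  have hS : S.Nonempty := ⟨0, by simp [S]⟩
  set J := S.max' hS with hJ
  have hJS : J ∈ S := S.max'_mem hS
  have hJm : J ≤ m ∧ (J = 0 ∨ ∃ v ∈ L, w.take J = v.take J) := by
    simpa [S, Nat.lt_succ_iff] using hJS
  have hcard : m - J ≤ (prefW w \ prefL L).card := by
    let f : Fin (m - J) → Word 2 M := fun j => ⟨w.take (J + j + 1), by
      have := j.2
      intro h
      have h2 := congrArg List.length h
      rw [List.length_take, List.length_nil] at h2
      omega⟩
    have hf : Function.Injective f := by
      intro i j h
      have h2 := congrArg (fun x : Word 2 M => x.1.length) h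
      simp only [List.length_take, f] at h2
      have := i.2
      have := j.2
      apply Fin.ext
      omega
    calc m - J = (Finset.univ.image f).card := by
          rw [Finset.card_image_of_injective _ hf]
          simp
      _ ≤ _ := by
          apply Finset.card_le_card
          intro u hu
          simp only [Finset.mem_image, Finset.mem_univ, true_and] at hu
          obtain ⟨j, rfl⟩ := hu
          rw [Finset.mem_sdiff]
          refine ⟨(mem_prefW _ _).2 (List.take_prefix _ _), ?_⟩
          intro hmem
          simp only [prefL, Finset.mem_biUnion, List.mem_toFinset, mem_prefW, f] at hmem
          obtain ⟨v, hv, hpre⟩ := hmem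
          have h3 := List.prefix_iff_eq_take.1 hpre
          have h4 : (w.take (J + j + 1)).length = J + j + 1 := by
            have := j.2
            simp; omega
          rw [h4] at h3
          have h5 : J + j + 1 ∈ S := by
            have := j.2
            simp only [S, Finset.mem_filter, Finset.mem_range]
            exact ⟨by omega, Or.inr ⟨v, hv, h3⟩⟩
          have := S.le_max' _ h5
          omega
  refine (pow_le_pow_right_of_le_one' hq hcard).trans ?_
  obtain ⟨hJ1, hJ2⟩ := hJm
  rcases hJ2 with h0 | ⟨v, hv, hvw⟩
  · rw [h0, Nat.sub_zero]
    exact le_self_add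
  · refine le_trans ?_ le_add_self
    have h6 : brW q m v w ≤ (L.map (fun v => brW q m v w)).sum :=
      List.single_le_sum (fun _ _ => zero_le) _ (List.mem_map_of_mem hv)
    refine le_trans ?_ h6
    rw [brW]
    refine le_trans ?_ (Finset.single_le_sum (f := fun j => if w.take j = v.take j then q ^ (m - j)
      else 0) (fun _ _ => zero_le) (Finset.mem_range.2 (Nat.lt_succ_of_le hJ1)))
    simp [hvw]

lemma measure_retSet_cons_le {M : ℕ} {p : ℝ} (hp1 : p ≤ 1) {P : Measure (PercSpace 2 M)}
    (hP : IsBernoulliPerc 2 M p P) (m : ℕ)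
    (L : List (List (Alpha 2 M))) (w : List (Alpha 2 M)) (hw : w.length = m) :
    P (retSet (w :: L)) ≤ P (retSet L) * (ENNReal.ofReal p ^ m +
      (L.map (fun v => brW (ENNReal.ofReal p) m v w)).sum) := by
  rw [measure_retSet hP, measure_retSet hP]
  have h : (prefL (w :: L)).card = (prefL L).card + (prefW w \ prefL L).card := by
    have : prefL (w :: L) = prefL L ∪ (prefW w \ prefL L) := by
      rw [Finset.union_sdiff_self_eq_union, Finset.union_comm]
      simp [prefL, Finset.biUnion_insert]
    rw [this, Finset.card_union_of_disjoint Finset.disjoint_sdiff]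
  rw [h, pow_add]
  gcongr
  exact pow_card_sdiff_le _ (ENNReal.ofReal_le_one.2 hp1) m L w hw

/-- Number of retained words of `T`. -/
def cnt {M : ℕ} (T : Finset (List (Alpha 2 M))) (ω : PercSpace 2 M) : ℝ≥0∞ :=
  ∑ w ∈ T, (retSet [w]).indicator 1 ω

lemma measurable_cnt {M : ℕ} (T : Finset (List (Alpha 2 M))) : Measurable (cnt T) := by
  unfold cnt
  refine Finset.measurable_sum _ fun w _ => ?_
  exact measurable_one.indicator (measurableSet_retSet _)

lemma moment_step {M : ℕ} {p : ℝ} (hp1 : p ≤ 1) {P : Measure (PercSpace 2 M)}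
    (hP : IsBernoulliPerc 2 M p P) (m : ℕ) (T : Finset (List (Alpha 2 M)))
    (hT : ∀ w ∈ T, w.length = m) (D : ℝ≥0∞)
    (hD : ∀ v ∈ T, ∑ w ∈ T, brW (ENNReal.ofReal p) m v w ≤ D) (n : ℕ) :
    ∀ L : List (List (Alpha 2 M)), (∀ w ∈ L, w ∈ T) →
      ∫⁻ ω in retSet L, cnt T ω ^ n ∂P ≤
        P (retSet L) * (((L.length + 1).ascFactorial n : ℕ) * D ^ n) := by
  induction n with
  | zero => intro L _; simp
  | succ n ih =>
    intro L hL
    have e1 : ∀ ω, cnt T ω ^ (n + 1) =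
        ∑ w ∈ T, (retSet [w]).indicator (fun ω => cnt T ω ^ n) ω := by
      intro ω
      rw [pow_succ']
      nth_rewrite 1 [cnt]
      rw [Finset.sum_mul]
      apply Finset.sum_congr rfl
      intro w _
      by_cases h : ω ∈ retSet [w] <;> simp [h]
    simp_rw [e1]
    rw [lintegral_finset_sum _ fun w _ =>
      ((measurable_cnt T).pow_const n).indicator (measurableSet_retSet _)]
    have e2 : ∀ w ∈ T, ∫⁻ ω in retSet L, (retSet [w]).indicator (fun ω => cnt T ω ^ n) ω ∂P
        ≤ P (retSet L) * (ENNReal.ofReal p ^ m +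
      (L.map (fun v => brW (ENNReal.ofReal p) m v w)).sum) *
        (((L.length + 2).ascFactorial n : ℕ) * D ^ n) := by
      intro w hw
      rw [lintegral_indicator (measurableSet_retSet _),
        Measure.restrict_restrict (measurableSet_retSet _)]
      have : retSet [w] ∩ retSet L = retSet (w :: L) := by
        ext ω
        simp [retSet]
      rw [this]
      refine (ih (w :: L) ?_).trans ?_
      · intro x hx
        rcases List.mem_cons.1 hx with rfl | hx
        · exact hw
        · exact hL x hx
      · rw [List.length_cons]
        gcongr
        exact measure_retSet_cons_le hp1 hP m L w (hT w hw)
    refine (Finset.sum_le_sum e2).trans ?_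
    rw [← Finset.sum_mul, ← Finset.mul_sum, Finset.sum_add_distrib]
    have e3 : ∑ w ∈ T, ENNReal.ofReal p ^ m ≤ D := by
      rcases T.eq_empty_or_nonempty with rfl | ⟨v, hv⟩
      · simp
      · refine le_trans ?_ (hD v hv)
        apply Finset.sum_le_sum
        intro w _
        rw [brW]
        refine le_trans ?_ (Finset.single_le_sum (f := fun j => if w.take j = v.take j then
          ENNReal.ofReal p ^ (m - j) else 0) (fun _ _ => zero_le)
            (Finset.mem_range.2 (Nat.succ_pos m)))
        simp
    have e4 : ∀ L : List (List (Alpha 2 M)), (∀ w ∈ L, w ∈ T) →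
        ∑ w ∈ T, (L.map (fun v => brW (ENNReal.ofReal p) m v w)).sum ≤ L.length * D := by
      intro L
      induction L with
      | nil => simp
      | cons v L ih2 =>
        intro h
        simp only [List.map_cons, List.sum_cons, Finset.sum_add_distrib, List.length_cons]
        push_cast
        rw [add_mul, one_mul, add_comm]
        exact add_le_add (ih2 fun w hw => h w (List.mem_cons_of_mem _ hw)) (hD v (h v (by simp)))
    have e5 : (∑ w ∈ T, ENNReal.ofReal p ^ m) +
        ∑ w ∈ T, (L.map (fun v => brW (ENNReal.ofReal p) m v w)).sum ≤ (L.length + 1) * D := by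
      rw [add_mul, one_mul, add_comm]
      exact add_le_add (e4 L hL) e3
    have e6 : (L.length + 1).ascFactorial (n + 1) = (L.length + 1) * (L.length + 2).ascFactorial n := by
      rw [Nat.succ_ascFactorial, Nat.ascFactorial_succ]
    calc _ ≤ P (retSet L) * ((L.length + 1) * D) * (((L.length + 2).ascFactorial n : ℕ) * D ^ n) := by
          gcongr
      _ = _ := by
          rw [e6]
          push_cast
          ring

lemma moment_bound {M : ℕ} {p : ℝ} (hp1 : p ≤ 1) {P : Measure (PercSpace 2 M)}
    (hP : IsBernoulliPerc 2 M p P) (m : ℕ) (T : Finset (List (Alpha 2 M)))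
    (hT : ∀ w ∈ T, w.length = m) (D : ℝ≥0∞)
    (hD : ∀ v ∈ T, ∑ w ∈ T, brW (ENNReal.ofReal p) m v w ≤ D) (n : ℕ) :
    ∫⁻ ω, cnt T ω ^ n ∂P ≤ (n.factorial : ℕ) * D ^ n := by
  have := hP.1
  have h := moment_step hp1 hP m T hT D hD n [] (by simp)
  have h2 : (retSet [] : Set (PercSpace 2 M)) = univ := by
    ext ω; simp [retSet]
  rw [h2] at h
  simpa [Nat.one_ascFactorial] using h

lemma mean_cnt {M : ℕ} {p : ℝ} {P : Measure (PercSpace 2 M)}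
    (hP : IsBernoulliPerc 2 M p P) (m : ℕ) :
    ∫⁻ ω, cnt (wordsLen M m) ω ∂P = ((M : ℝ≥0∞) ^ 2 * ENNReal.ofReal p) ^ m := by
  unfold cnt
  rw [lintegral_finset_sum _ fun w _ => measurable_one.indicator (measurableSet_retSet _)]
  have : ∀ w ∈ wordsLen M m, ∫⁻ ω, (retSet [w]).indicator 1 ω ∂P = ENNReal.ofReal p ^ m := by
    intro w hw
    rw [lintegral_indicator_one (measurableSet_retSet _), measure_retSet_singleton hP,
      (mem_wordsLen M m w).1 hw]
  rw [Finset.sum_congr rfl this, Finset.sum_const, card_wordsLen, mul_pow]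
  simp

/-- Words of length `m` whose level-`k` ancestor is close to a given strip. -/
def nearT (M C k : ℕ) (a b : ℝ) (m : ℕ) : Finset (List (Alpha 2 M)) :=
  (wordsLen M m).filter (fun w =>
    |(cIdx M 0 (w.take k) : ℝ) + a * (cIdx M 1 (w.take k) : ℝ) - b| ≤ C)

lemma count_A (M : ℕ) (hM : 2 ≤ M) (C k : ℕ) (a b : ℝ) (u : List (Alpha 2 M)) (j : ℕ) (hj : j ≤ k) :
    ((nearT M C k a b k).filter (fun w => w.take j = u)).card ≤ (2 * C + 1) * M ^ (k - j) := by
  let F : List (Alpha 2 M) → ℕ × ℤ := fun w =>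
    (cIdx M 1 (w.drop j), (cIdx M 0 w : ℤ) - ⌈b - a * (cIdx M 1 w : ℝ) - C⌉)
  have hmaps : ∀ w ∈ (nearT M C k a b k).filter (fun w => w.take j = u),
      F w ∈ Finset.range (M ^ (k - j)) ×ˢ Finset.Icc (0 : ℤ) (2 * C) := by
    intro w hw
    simp only [nearT, Finset.mem_filter, mem_wordsLen] at hw
    obtain ⟨⟨hl, hn⟩, hu⟩ := hw
    rw [List.take_of_length_le hl.le, abs_le] at hn
    simp only [F, Finset.mem_product, Finset.mem_range, Finset.mem_Icc]
    refine ⟨?_, ?_, ?_⟩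
    · have := cIdx_lt M 1 (w.drop j)
      rwa [List.length_drop, hl] at this
    · rw [sub_nonneg, Int.ceil_le]
      push_cast
      linarith [hn.1]
    · have h1 := Int.le_ceil (b - a * (cIdx M 1 w : ℝ) - C)
      have : ((cIdx M 0 w : ℤ) : ℝ) - (⌈b - a * (cIdx M 1 w : ℝ) - C⌉ : ℝ) ≤ 2 * C := by
        push_cast
        linarith [hn.2]
      exact_mod_cast this
  have hinj : Set.InjOn F ((nearT M C k a b k).filter (fun w => w.take j = u)) := by
    intro w hw w' hw' h
    simp only [nearT, Finset.coe_filter, mem_ofPred_eq, Finset.mem_filter, mem_wordsLen] at hw hw'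
    obtain ⟨⟨hl, hn⟩, hu⟩ := hw
    obtain ⟨⟨hl', hn'⟩, hu'⟩ := hw'
    simp only [F, Prod.mk.injEq] at h
    obtain ⟨h1, h2⟩ := h
    have h3 : cIdx M 1 w = cIdx M 1 w' := by
      rw [← List.take_append_drop j w, ← List.take_append_drop j w', cIdx_append, cIdx_append,
        h1, hu, hu', List.length_drop, List.length_drop, hl, hl']
    rw [h3] at h2
    apply cIdx_inj M hM w w' (hl.trans hl'.symm)
    intro i
    fin_cases i
    · simpa using h2
    · exact h3
  refine (Finset.card_le_card_of_injOn F hmaps hinj).trans ?_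
  rw [Finset.card_product, Finset.card_range, Int.card_Icc, mul_comm]
  apply Nat.mul_le_mul_right
  omega

lemma count_B (M : ℕ) (hM : 2 ≤ M) (C k r : ℕ) (a b : ℝ) (u : List (Alpha 2 M)) (j : ℕ)
    (hj : j ≤ k) :
    ((nearT M C k a b (k + r)).filter (fun w => w.take j = u)).card
      ≤ (2 * C + 1) * M ^ (k - j) * (M ^ 2) ^ r := by
  refine le_trans ?_ (Nat.mul_le_mul_right _ (count_A M hM C k a b u j hj))
  rw [← card_wordsLen M r, ← Finset.card_product]
  apply Finset.card_le_card_of_injOn (fun w => (w.take k, w.drop k))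
  · intro w hw
    simp only [nearT, Finset.coe_filter, Finset.mem_filter, mem_wordsLen, mem_ofPred_eq,
      Finset.coe_product, Set.mem_prod, Finset.mem_coe] at hw ⊢
    obtain ⟨⟨hl, hn⟩, hu⟩ := hw
    refine ⟨⟨⟨by simp [hl], ?_⟩, ?_⟩, by simp [hl]⟩
    · rwa [List.take_take, min_self]
    · rwa [List.take_take, min_eq_left hj]
  · intro w _ w' _ h
    simp only [Prod.mk.injEq] at h
    rw [← List.take_append_drop k w, ← List.take_append_drop k w', h.1, h.2]

lemma count_C (M C k : ℕ) (a b : ℝ) (m : ℕ) (u : List (Alpha 2 M)) (j : ℕ) :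
    ((nearT M C k a b m).filter (fun w => w.take j = u)).card ≤ (M ^ 2) ^ (m - j) := by
  rw [← card_wordsLen M (m - j)]
  apply Finset.card_le_card_of_injOn (fun w => w.drop j)
  · intro w hw
    simp only [nearT, Finset.coe_filter, Finset.mem_filter, mem_wordsLen, mem_ofPred_eq,
      Finset.mem_coe] at hw ⊢
    simp [hw.1.1]
  · intro w hw w' hw' h
    simp only [Finset.coe_filter, mem_ofPred_eq] at hw hw' h
    rw [← List.take_append_drop j w, ← List.take_append_drop j w', h, hw.2, hw'.2]

lemma sum_brW_le (M : ℕ) (hM : 2 ≤ M) (p : ℝ) (hp0 : 0 < p) (lam : ℝ)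
    (hlam : lam = (M : ℝ) ^ 2 * p) (hlam1 : 1 < lam) (X : ℝ) (hX1 : 1 ≤ X) (hX : p * M ≤ X)
    (C k r : ℕ) (a b : ℝ) (v : List (Alpha 2 M)) :
    ∑ w ∈ nearT M C k a b (k + r), brW (ENNReal.ofReal p) (k + r) v w ≤
      ENNReal.ofReal (lam ^ r * X ^ k * (k + 1) * (2 * C + 1 + 1 / (lam - 1))) := by
  have h1 : ∑ w ∈ nearT M C k a b (k + r), brW (ENNReal.ofReal p) (k + r) v w
      = ENNReal.ofReal (∑ j ∈ Finset.range (k + r + 1),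
        (((nearT M C k a b (k + r)).filter (fun w => w.take j = v.take j)).card : ℝ)
          * p ^ (k + r - j)) := by
    simp only [brW]
    rw [Finset.sum_comm, ENNReal.ofReal_sum_of_nonneg (fun _ _ => by positivity)]
    apply Finset.sum_congr rfl
    intro j _
    rw [← Finset.sum_filter, Finset.sum_const, ENNReal.ofReal_mul (by positivity),
      ENNReal.ofReal_pow hp0.le]
    simp
  rw [h1]
  apply ENNReal.ofReal_le_ofReal
  have hM0 : (0 : ℝ) < M := by positivity
  have hpl : ∀ n, ((M : ℝ) ^ 2) ^ n * p ^ n = lam ^ n := by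
    intro n; rw [← mul_pow, hlam]
  have hl0 : 0 < lam := by linarith
  rw [show k + r + 1 = (k + 1) + r by ring, Finset.sum_range_add]
  have h2 : ∑ j ∈ Finset.range (k + 1),
        (((nearT M C k a b (k + r)).filter (fun w => w.take j = v.take j)).card : ℝ)
          * p ^ (k + r - j) ≤ (k + 1) * ((2 * C + 1) * (lam ^ r * X ^ k)) := by
    have : ∀ j ∈ Finset.range (k + 1),
        (((nearT M C k a b (k + r)).filter (fun w => w.take j = v.take j)).card : ℝ)
          * p ^ (k + r - j) ≤ (2 * C + 1) * (lam ^ r * X ^ k) := by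
      intro j hj
      have hj : j ≤ k := by simpa [Nat.lt_succ_iff] using hj
      have hc : (((nearT M C k a b (k + r)).filter (fun w => w.take j = v.take j)).card : ℝ)
          ≤ (2 * C + 1) * (M : ℝ) ^ (k - j) * ((M : ℝ) ^ 2) ^ r := by
        exact_mod_cast count_B M hM C k r a b (v.take j) j hj
      calc _ ≤ (2 * C + 1) * (M : ℝ) ^ (k - j) * ((M : ℝ) ^ 2) ^ r * p ^ (k + r - j) := by gcongr
        _ = (2 * C + 1) * (lam ^ r * (p * M) ^ (k - j)) := by
            rw [← hpl, show k + r - j = (k - j) + r by omega, pow_add, mul_pow]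
            ring
        _ ≤ (2 * C + 1) * (lam ^ r * X ^ k) := by
            gcongr
            calc (p * M) ^ (k - j) ≤ X ^ (k - j) := by gcongr
              _ ≤ X ^ k := pow_le_pow_right₀ hX1 (by omega)
    refine (Finset.sum_le_sum this).trans ?_
    simp
  have h3 : ∑ x ∈ Finset.range r,
        (((nearT M C k a b (k + r)).filter (fun w => w.take (k + 1 + x) = v.take (k + 1 + x))).card : ℝ)
          * p ^ (k + r - (k + 1 + x)) ≤ lam ^ r * (1 / (lam - 1)) := by
    have : ∀ x ∈ Finset.range r,
        (((nearT M C k a b (k + r)).filter (fun w => w.take (k + 1 + x) = v.take (k + 1 + x))).card : ℝ)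
          * p ^ (k + r - (k + 1 + x)) ≤ lam ^ (r - 1 - x) := by
      intro x hx
      rw [Finset.mem_range] at hx
      have hc : (((nearT M C k a b (k + r)).filter
          (fun w => w.take (k + 1 + x) = v.take (k + 1 + x))).card : ℝ)
          ≤ ((M : ℝ) ^ 2) ^ (k + r - (k + 1 + x)) := by
        exact_mod_cast count_C M C k a b (k + r) (v.take (k + 1 + x)) (k + 1 + x)
      rw [show r - 1 - x = k + r - (k + 1 + x) by omega, ← hpl]
      gcongr
    refine (Finset.sum_le_sum this).trans ?_
    rw [Finset.sum_range_reflect (fun x => lam ^ x) r, geom_sum_eq hlam1.ne']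
    rw [mul_one_div]
    apply div_le_div_of_nonneg_right _ (by linarith)
    linarith
  have hd : 0 < 1 / (lam - 1) := by
    apply one_div_pos.2; linarith
  have hXk : 1 ≤ X ^ k := one_le_pow₀ hX1
  have h4 : lam ^ r * (1 / (lam - 1)) ≤ lam ^ r * X ^ k * (k + 1) * (1 / (lam - 1)) := by
    gcongr
    have : (1 : ℝ) ≤ X ^ k * (k + 1) := by
      have : (0 : ℝ) ≤ k := by positivity
      nlinarith
    have hr : 0 < lam ^ r := by positivity
    nlinarith
  calc _ ≤ (k + 1) * ((2 * C + 1) * (lam ^ r * X ^ k)) + lam ^ r * (1 / (lam - 1)) :=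
        add_le_add h2 h3
    _ ≤ (k + 1) * ((2 * C + 1) * (lam ^ r * X ^ k)) +
        lam ^ r * X ^ k * (k + 1) * (1 / (lam - 1)) := by linarith
    _ = _ := by ring

lemma near_length {M C k : ℕ} {a b : ℝ} {m : ℕ} : ∀ w ∈ nearT M C k a b m, w.length = m := by
  intro w hw
  simp only [nearT, Finset.mem_filter, mem_wordsLen] at hw
  exact hw.1

lemma near_zero (M m : ℕ) : nearT M 0 0 0 0 m = wordsLen M m := by
  ext w
  simp [nearT, cIdx]

/-- Tail bound for the number of retained cubes in a strip. -/
lemma tail_bound (M : ℕ) (hM : 2 ≤ M) (p : ℝ) (hp0 : 0 < p) (hp1 : p ≤ 1)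
    {P : Measure (PercSpace 2 M)} (hP : IsBernoulliPerc 2 M p P) (lam : ℝ)
    (hlam : lam = (M : ℝ) ^ 2 * p) (hlam1 : 1 < lam) (X : ℝ) (hX1 : 1 ≤ X) (hX : p * M ≤ X)
    (tau : ℝ) (htau : 0 < tau)
    (C k m : ℕ) (hk : k ≤ m) (a b : ℝ) (n : ℕ) :
    P {ω | ENNReal.ofReal (lam ^ m / tau ^ k) ≤ cnt (nearT M C k a b m) ω} ≤
      ENNReal.ofReal (n.factorial * ((2 * C + 1 + 1 / (lam - 1)) * (k + 1) * (X * tau / lam) ^ k) ^ n) := by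
  obtain ⟨r, rfl⟩ := Nat.exists_eq_add_of_le hk
  have hl0 : 0 < lam := by linarith
  have hd : 0 < 1 / (lam - 1) := by
    apply one_div_pos.2; linarith
  set D : ℝ := lam ^ r * X ^ k * (k + 1) * (2 * C + 1 + 1 / (lam - 1)) with hD
  have hmom := moment_bound hp1 hP (k + r) (nearT M C k a b (k + r)) near_length
    (ENNReal.ofReal D) (fun v _ => sum_brW_le M hM p hp0 lam hlam hlam1 X hX1 hX C k r a b v) n
  set thr : ℝ := lam ^ (k + r) / tau ^ k with hthr
  have hthr0 : 0 < thr := by positivity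
  have hD0 : 0 < D := by positivity
  have hmk := mul_meas_ge_le_lintegral (μ := P) ((measurable_cnt (nearT M C k a b (k + r))).pow_const n)
    (ENNReal.ofReal thr ^ n)
  have hsub : P {ω | ENNReal.ofReal thr ≤ cnt (nearT M C k a b (k + r)) ω} ≤
      P {ω | ENNReal.ofReal thr ^ n ≤ cnt (nearT M C k a b (k + r)) ω ^ n} := by
    apply measure_mono
    intro ω hω
    simp only [mem_ofPred_eq] at hω ⊢
    gcongr
  have h1 : ENNReal.ofReal (thr ^ n) * P {ω | ENNReal.ofReal thr ≤ cnt (nearT M C k a b (k + r)) ω}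
      ≤ ENNReal.ofReal (n.factorial * D ^ n) := by
    rw [ENNReal.ofReal_mul (by positivity), ENNReal.ofReal_pow hD0.le, ENNReal.ofReal_natCast,
      ENNReal.ofReal_pow hthr0.le]
    exact (mul_le_mul_right hsub _).trans (hmk.trans hmom)
  have h2 : P {ω | ENNReal.ofReal thr ≤ cnt (nearT M C k a b (k + r)) ω} ≤
      ENNReal.ofReal (n.factorial * D ^ n) / ENNReal.ofReal (thr ^ n) := by
    rw [ENNReal.le_div_iff_mul_le]
    · rwa [mul_comm]
    · left
      simp only [ne_eq, ENNReal.ofReal_eq_zero, not_le]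
      positivity
    · left
      exact ENNReal.ofReal_ne_top
  refine h2.trans ?_
  rw [← ENNReal.ofReal_div_of_pos (by positivity)]
  apply ENNReal.ofReal_le_ofReal
  apply le_of_eq
  rw [mul_div_assoc, ← div_pow]
  congr 2
  rw [hD, hthr, pow_add, div_pow, mul_pow]
  field_simp

/-- Paley–Zygmund type lower bound. -/
lemma pz_bound (M : ℕ) (hM : 2 ≤ M) (p : ℝ) (hp0 : 0 < p) (hp1 : p ≤ 1)
    {P : Measure (PercSpace 2 M)} (hP : IsBernoulliPerc 2 M p P) (lam : ℝ)
    (hlam : lam = (M : ℝ) ^ 2 * p) (hlam1 : 1 < lam) :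
    ∃ c : ℝ, 0 < c ∧ ∀ m, ENNReal.ofReal c ≤
      P {ω | ENNReal.ofReal (lam ^ m / 2) ≤ cnt (wordsLen M m) ω} := by
  have := hP.1
  have hl0 : 0 < lam := by linarith
  have hd : 0 < 1 / (lam - 1) := by
    apply one_div_pos.2; linarith
  set K : ℝ := 1 + 1 / (lam - 1) with hK
  have hK0 : 0 < K := by positivity
  refine ⟨1 / (32 * K ^ 2), by positivity, ?_⟩
  intro m
  set A : Set (PercSpace 2 M) := {ω | ENNReal.ofReal (lam ^ m / 2) ≤ cnt (wordsLen M m) ω} with hA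
  have hAm : MeasurableSet A := measurableSet_le measurable_const (measurable_cnt _)
  have hmom := moment_bound hp1 hP m (wordsLen M m) (fun w hw => (mem_wordsLen M m w).1 hw)
    (ENNReal.ofReal (lam ^ m * K)) (fun v _ => by
      have := sum_brW_le M hM p hp0 lam hlam hlam1 (max 1 (p * M)) (le_max_left _ _)
        (le_max_right _ _) 0 0 m 0 0 v
      rw [Nat.zero_add, near_zero] at this
      refine this.trans (le_of_eq ?_)
      simp [hK]) 2
  have hmean := mean_cnt hP m
  have hpt : ∀ ω, cnt (wordsLen M m) ω ≤ ENNReal.ofReal (lam ^ m / 2) +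
      A.indicator (fun _ => ENNReal.ofReal (8 * K ^ 2 * lam ^ m)) ω +
      ENNReal.ofReal (1 / (8 * K ^ 2 * lam ^ m)) * cnt (wordsLen M m) ω ^ 2 := by
    intro ω
    by_cases h1 : ω ∈ A
    · by_cases h2 : cnt (wordsLen M m) ω ≤ ENNReal.ofReal (8 * K ^ 2 * lam ^ m)
      · rw [indicator_of_mem h1]
        exact h2.trans (le_add_self.trans le_self_add)
      · refine le_trans ?_ le_add_self
        have h4 : (1 : ℝ≥0∞) ≤ ENNReal.ofReal (1 / (8 * K ^ 2 * lam ^ m)) *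
            cnt (wordsLen M m) ω := by
          calc (1 : ℝ≥0∞) = ENNReal.ofReal (1 / (8 * K ^ 2 * lam ^ m)) *
                ENNReal.ofReal (8 * K ^ 2 * lam ^ m) := by
                rw [← ENNReal.ofReal_mul (by positivity), one_div, inv_mul_cancel₀ (by positivity)]
                simp
            _ ≤ _ := by
                gcongr
                exact (not_le.1 h2).le
        calc cnt (wordsLen M m) ω = 1 * cnt (wordsLen M m) ω := (one_mul _).symm
          _ ≤ (ENNReal.ofReal (1 / (8 * K ^ 2 * lam ^ m)) * cnt (wordsLen M m) ω) *
              cnt (wordsLen M m) ω := by gcongr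
          _ = _ := by ring
    · have h3 : cnt (wordsLen M m) ω ≤ ENNReal.ofReal (lam ^ m / 2) := by
        simp only [hA, mem_ofPred_eq, not_le] at h1
        exact h1.le
      exact h3.trans (by rw [add_assoc]; exact le_self_add)
  have hIntg := lintegral_mono (μ := P) hpt
  rw [lintegral_add_right _ ((measurable_cnt _).pow_const 2 |>.const_mul _),
    lintegral_add_right _ (measurable_const.indicator hAm), lintegral_const,
    lintegral_indicator_const hAm, lintegral_const_mul _ ((measurable_cnt _).pow_const 2),
    measure_univ, mul_one, hmean] at hIntg
  have hlamE : ((M : ℝ≥0∞) ^ 2 * ENNReal.ofReal p) ^ m = ENNReal.ofReal (lam ^ m) := by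
    rw [hlam, ENNReal.ofReal_pow (by positivity), ENNReal.ofReal_mul (by positivity),
      ENNReal.ofReal_pow (by positivity), ENNReal.ofReal_natCast]
  rw [hlamE] at hIntg
  have hPA : P A ≠ ⊤ := measure_ne_top _ _
  have hIntg2 : ENNReal.ofReal (lam ^ m) ≤ ENNReal.ofReal (lam ^ m / 2 +
      8 * K ^ 2 * lam ^ m * (P A).toReal + 1 / (8 * K ^ 2 * lam ^ m) * (2 * (lam ^ m * K) ^ 2)) := by
    refine hIntg.trans ?_
    rw [ENNReal.ofReal_add (by positivity) (by positivity), ENNReal.ofReal_add (by positivity)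
      (by positivity), ENNReal.ofReal_mul (q := (P A).toReal) (by positivity),
      ENNReal.ofReal_toReal hPA,
      ENNReal.ofReal_mul (q := 2 * (lam ^ m * K) ^ 2) (by positivity),
      ENNReal.ofReal_mul (q := (lam ^ m * K) ^ 2) (by positivity),
      ENNReal.ofReal_pow (by positivity)]
    gcongr
    refine hmom.trans (le_of_eq ?_)
    simp
  rw [ENNReal.ofReal_le_ofReal_iff (by positivity)] at hIntg2
  have hlm : 0 < lam ^ m := by positivity
  have e1 : 1 / (8 * K ^ 2 * lam ^ m) * (2 * (lam ^ m * K) ^ 2) = lam ^ m / 4 := by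
    field_simp
    ring
  rw [e1] at hIntg2
  rw [← ENNReal.ofReal_toReal hPA]
  apply ENNReal.ofReal_le_ofReal
  rw [div_le_iff₀ (by positivity)]
  have : lam ^ m * 1 ≤ lam ^ m * ((P A).toReal * (32 * K ^ 2)) := by nlinarith
  exact le_of_mul_le_mul_left this hlm

/-- Discretized parameters of strips at level `k`. -/
def parK (M R k : ℕ) : Finset (ℤ × ℤ) :=
  Finset.Icc (-((R * M ^ k : ℕ) : ℤ)) ((R * M ^ k : ℕ) : ℤ) ×ˢ
    Finset.Icc (-(((R + 3) * M ^ k : ℕ) : ℤ)) (((R + 3) * M ^ k : ℕ) : ℤ)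

lemma card_parK (M : ℕ) (hM : 2 ≤ M) (R k : ℕ) :
    (parK M R k).card ≤ ((2 * R + 7) * M ^ k) ^ 2 := by
  have h1 : 1 ≤ M ^ k := Nat.one_le_pow _ _ (by omega)
  rw [parK, Finset.card_product, Int.card_Icc, Int.card_Icc, sq]
  apply Nat.mul_le_mul
  · rw [Int.toNat_le]
    push_cast
    have h1' : (1 : ℤ) ≤ (M : ℤ) ^ k := by exact_mod_cast h1
    nlinarith
  · rw [Int.toNat_le]
    push_cast
    have h1' : (1 : ℤ) ≤ (M : ℤ) ^ k := by exact_mod_cast h1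
    nlinarith

/-- The good event at level `m`. -/
def goodEv (M R : ℕ) (lam tau : ℝ) (n0 m : ℕ) : Set (PercSpace 2 M) :=
  {ω | ENNReal.ofReal (lam ^ m / 2) ≤ cnt (wordsLen M m) ω ∧
    ∀ k, n0 ≤ k → k ≤ m → ∀ q ∈ parK M R k,
      cnt (nearT M (R + 4) k ((q.1 : ℝ) / (M : ℝ) ^ k) (q.2 : ℝ) m) ω
        < ENNReal.ofReal (lam ^ m / tau ^ k)}

lemma measurableSet_goodEv (M R : ℕ) (lam tau : ℝ) (n0 m : ℕ) :
    MeasurableSet (goodEv M R lam tau n0 m) := by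
  have : goodEv M R lam tau n0 m =
      {ω | ENNReal.ofReal (lam ^ m / 2) ≤ cnt (wordsLen M m) ω} ∩
      ⋂ k, ⋂ (_ : n0 ≤ k), ⋂ (_ : k ≤ m), ⋂ q ∈ parK M R k,
      {ω | cnt (nearT M (R + 4) k ((q.1 : ℝ) / (M : ℝ) ^ k) (q.2 : ℝ) m) ω
        < ENNReal.ofReal (lam ^ m / tau ^ k)} := by
    ext ω
    simp only [goodEv, mem_ofPred_eq, mem_inter_iff, mem_iInter]
  rw [this]
  refine (measurableSet_le measurable_const (measurable_cnt _)).inter ?_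
  refine MeasurableSet.iInter fun k => MeasurableSet.iInter fun _ => MeasurableSet.iInter fun _ =>
    Finset.measurableSet_biInter _ fun q _ => measurableSet_lt (measurable_cnt _) measurable_const

lemma summable_aux (A y : ℝ) (n : ℕ) (hy0 : 0 ≤ y) (hy : y < 1) :
    Summable (fun k : ℕ => A * ((k + 1 : ℝ) ^ n * y ^ k)) := by
  apply Summable.mul_left
  rcases hy0.eq_or_lt with h | h
  · apply summable_of_ne_finset_zero (s := {0})
    intro b hb
    have : b ≠ 0 := by simpa using hb
    rw [← h]
    simp [this]
  · have h1 := summable_pow_mul_geometric_of_norm_lt_one (R := ℝ) n (r := y)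
      (by rw [Real.norm_of_nonneg hy0]; exact hy)
    have h2 := (summable_nat_add_iff 1).2 h1
    have h3 := h2.mul_left (y⁻¹)
    refine h3.congr fun k => ?_
    push_cast
    field_simp
    ring

lemma good_prob (M : ℕ) (hM : 2 ≤ M) (p : ℝ) (hp0 : 0 < p) (hp1 : p ≤ 1)
    {P : Measure (PercSpace 2 M)} (hP : IsBernoulliPerc 2 M p P) (lam : ℝ)
    (hlam : lam = (M : ℝ) ^ 2 * p) (tau : ℝ) (htau1 : 1 < tau)
    (htauM : tau < M) (htaul : tau < lam) (R : ℕ) :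
    ∃ n0 : ℕ, 1 ≤ n0 ∧ ∃ c : ℝ, 0 < c ∧ ∀ m, ENNReal.ofReal c ≤ P (goodEv M R lam tau n0 m) := by
  have := hP.1
  have hlam1 : 1 < lam := by linarith
  have hM0 : (0 : ℝ) < M := by positivity
  have hl0 : 0 < lam := by linarith
  obtain ⟨c, hc, hpz⟩ := pz_bound M hM p hp0 hp1 hP lam hlam hlam1
  set X : ℝ := max 1 (p * M) with hX
  have hX1 : 1 ≤ X := le_max_left _ _
  set rho : ℝ := X * tau / lam with hrho
  have hr0 : 0 ≤ rho := by positivity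
  have hr1 : rho < 1 := by
    rw [hrho, div_lt_one hl0, hX, max_mul_of_nonneg _ _ (by linarith)]
    apply max_lt
    · linarith
    · rw [hlam]
      have : p * M * tau < p * M * M := by
        apply mul_lt_mul_of_pos_left htauM; positivity
      nlinarith
  obtain ⟨n, hn⟩ : ∃ n : ℕ, rho ^ n < 1 / (M : ℝ) ^ 2 :=
    exists_pow_lt_of_lt_one (by positivity) hr1
  set K : ℝ := 2 * ((R + 4 : ℕ) : ℝ) + 1 + 1 / (lam - 1) with hK
  have hK0 : 0 < K := by
    have : 0 < 1 / (lam - 1) := one_div_pos.2 (by linarith)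
    positivity
  set y : ℝ := (M : ℝ) ^ 2 * rho ^ n with hy
  have hy1 : y < 1 := by
    rw [lt_div_iff₀ (by positivity)] at hn
    linarith
  set A : ℝ := (2 * R + 7) ^ 2 * (n.factorial * K ^ n) with hA
  have hA0 : 0 ≤ A := by positivity
  have hsum := summable_aux A y n (by positivity) hy1
  obtain ⟨s, hs⟩ := summable_iff_vanishing_norm.1 hsum (c / 2) (by linarith)
  refine ⟨s.sup id + 1, by omega, c / 2, by linarith, fun m => ?_⟩
  set n0 := s.sup id + 1
  have hdisj : Disjoint (Finset.Icc n0 m) s := by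
    rw [Finset.disjoint_left]
    intro k hk hks
    have := Finset.le_sup (f := id) hks
    simp only [Finset.mem_Icc, id] at hk this
    omega
  have hs' := hs _ hdisj
  have hcov : {ω | ENNReal.ofReal (lam ^ m / 2) ≤ cnt (wordsLen M m) ω} ⊆
      goodEv M R lam tau n0 m ∪ ⋃ k ∈ Finset.Icc n0 m, ⋃ q ∈ parK M R k,
        {ω | ENNReal.ofReal (lam ^ m / tau ^ k) ≤
          cnt (nearT M (R + 4) k ((q.1 : ℝ) / (M : ℝ) ^ k) (q.2 : ℝ) m) ω} := by
    intro ω hω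
    by_cases hg : ω ∈ goodEv M R lam tau n0 m
    · exact Or.inl hg
    · right
      simp only [goodEv, mem_ofPred_eq, not_and, not_forall, not_lt] at hg
      obtain ⟨k, h1, h2, q, hq, h3⟩ := hg hω
      simp only [mem_iUnion, Finset.mem_Icc]
      exact ⟨k, ⟨h1, h2⟩, q, hq, h3⟩
  have hbad : P (⋃ k ∈ Finset.Icc n0 m, ⋃ q ∈ parK M R k,
        {ω | ENNReal.ofReal (lam ^ m / tau ^ k) ≤
          cnt (nearT M (R + 4) k ((q.1 : ℝ) / (M : ℝ) ^ k) (q.2 : ℝ) m) ω})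
        ≤ ENNReal.ofReal (c / 2) := by
    refine (measure_biUnion_finset_le _ _).trans ?_
    have h1 : ∀ k ∈ Finset.Icc n0 m, P (⋃ q ∈ parK M R k,
        {ω | ENNReal.ofReal (lam ^ m / tau ^ k) ≤
          cnt (nearT M (R + 4) k ((q.1 : ℝ) / (M : ℝ) ^ k) (q.2 : ℝ) m) ω})
          ≤ ENNReal.ofReal (A * ((k + 1 : ℝ) ^ n * y ^ k)) := by
      intro k hk
      refine (measure_biUnion_finset_le _ _).trans ?_
      refine (Finset.sum_le_sum fun q _ => tail_bound M hM p hp0 hp1 hP lam hlam hlam1 X hX1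
        (le_max_right _ _) tau (by linarith) (R + 4) k m (Finset.mem_Icc.1 hk).2 _ _ n).trans ?_
      rw [Finset.sum_const, nsmul_eq_mul, ← ENNReal.ofReal_natCast,
        ← ENNReal.ofReal_mul (by positivity)]
      apply ENNReal.ofReal_le_ofReal
      rw [← hK, ← hrho]
      have hcard : ((parK M R k).card : ℝ) ≤ ((2 * R + 7) * (M : ℝ) ^ k) ^ 2 := by
        exact_mod_cast card_parK M hM R k
      refine (mul_le_mul_of_nonneg_right hcard (by positivity)).trans (le_of_eq ?_)
      rw [hA, hy]
      rw [mul_pow, mul_pow, mul_pow, mul_pow, ← pow_mul, ← pow_mul, ← pow_mul, ← pow_mul]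
      rw [mul_comm k 2, mul_comm k n]
      ring
    refine (Finset.sum_le_sum h1).trans ?_
    rw [← ENNReal.ofReal_sum_of_nonneg (fun k _ => by positivity)]
    apply ENNReal.ofReal_le_ofReal
    exact (le_abs_self _).trans hs'.le
  have h2 := (hpz m).trans ((measure_mono hcov).trans ((measure_union_le _ _).trans
    (add_le_add_right hbad _)))
  have h3 : ENNReal.ofReal c = ENNReal.ofReal (c / 2) + ENNReal.ofReal (c / 2) := by
    rw [← ENNReal.ofReal_add (by linarith) (by linarith)]
    congr 1
    ring
  rw [h3] at h2
  exact (ENNReal.add_le_add_iff_right ENNReal.ofReal_ne_top).1 h2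

lemma limsup_prob {Ω : Type*} [MeasurableSpace Ω] (P : Measure Ω) [IsFiniteMeasure P]
    (G : ℕ → Set Ω) (hG : ∀ m, MeasurableSet (G m)) (c : ℝ≥0∞) (h : ∀ m, c ≤ P (G m)) :
    c ≤ P {ω | ∀ n, ∃ m, n ≤ m ∧ ω ∈ G m} := by
  have h1 : {ω | ∀ n, ∃ m, n ≤ m ∧ ω ∈ G m} = ⋂ n : ℕ, ⋃ m, ⋃ (_ : n ≤ m), G m := by
    ext ω
    simp
  rw [h1]
  have h2 := tendsto_measure_iInter_atTop (μ := P) (s := fun n : ℕ => ⋃ m, ⋃ (_ : n ≤ m), G m)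
    (fun n => (MeasurableSet.iUnion fun m => MeasurableSet.iUnion fun _ => hG m).nullMeasurableSet)
    (fun a b hab => iUnion_mono fun m => iUnion_mono' fun hm => ⟨hab.trans hm, le_rfl⟩)
    ⟨0, measure_ne_top _ _⟩
  refine ge_of_tendsto' h2 fun n => (h n).trans (measure_mono ?_)
  exact subset_iUnion_of_subset n (subset_iUnion_of_subset le_rfl le_rfl)

/-- The linear functional `x ↦ x₀ + a x₁`. -/
def gmap (a : ℝ) (x : EuclideanSpace ℝ (Fin 2)) : ℝ := x 0 + a * x 1

lemma continuous_gmap (a : ℝ) : Continuous (gmap a) := by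
  unfold gmap
  fun_prop

/-- The lower left corner. -/
def corner (M : ℕ) (w : List (Alpha 2 M)) : EuclideanSpace ℝ (Fin 2) :=
  WithLp.toLp 2 (fun i => (cIdx M i w : ℝ) / (M : ℝ) ^ w.length)

lemma corner_mem (M : ℕ) (hM : 2 ≤ M) (w : List (Alpha 2 M)) : corner M w ∈ wordCube 2 M w := by
  rw [mem_wordCube M hM]
  intro i
  have hM0 : (0 : ℝ) < M := by positivity
  refine ⟨le_rfl, ?_⟩
  simp only [corner]
  gcongr
  linarith

lemma strip_near (M : ℕ) (hM : 2 ≤ M) (R : ℕ) (a b : ℝ) (ha : |a| ≤ R) (k m : ℕ) (hk : k ≤ m)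
    (w : List (Alpha 2 M)) (hw : w.length = m)
    (h : |gmap a (corner M w) - b| < 1 / (M : ℝ) ^ k) :
    (⌊a * (M : ℝ) ^ k⌋, ⌊b * (M : ℝ) ^ k⌋) ∈ parK M R k ∧
      w ∈ nearT M (R + 4) k ((⌊a * (M : ℝ) ^ k⌋ : ℝ) / (M : ℝ) ^ k) (⌊b * (M : ℝ) ^ k⌋ : ℝ) m := by
  have hM0 : (0 : ℝ) < M := by positivity
  obtain ⟨r, rfl⟩ := Nat.exists_eq_add_of_le hk
  have hN1 : (1 : ℝ) ≤ (M : ℝ) ^ k := one_le_pow₀ (by exact_mod_cast (by omega : 1 ≤ M))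
  set N : ℝ := (M : ℝ) ^ k with hN
  have hN0 : 0 < N := by linarith
  have hlen : (w.take k).length = k := by simp [hw]
  have hlend : (w.drop k).length = r := by simp [hw]
  have key : ∀ i, ∃ θ : ℝ, 0 ≤ θ ∧ θ ≤ 1 ∧
      corner M w i * N = (cIdx M i (w.take k) : ℝ) + θ := by
    intro i
    refine ⟨(cIdx M i (w.drop k) : ℝ) / (M : ℝ) ^ r, by positivity, ?_, ?_⟩
    · rw [div_le_one (by positivity)]
      have := (cIdx_lt M i (w.drop k)).le
      rw [hlend] at this
      exact_mod_cast this
    · have h1 := cIdx_append M i (w.take k) (w.drop k)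
      rw [List.take_append_drop, hlend] at h1
      simp only [corner]
      rw [h1, hw, hN, pow_add]
      push_cast
      field_simp
  have hU : ∀ i, (cIdx M i (w.take k) : ℝ) ≤ N := by
    intro i
    have := (cIdx_lt M i (w.take k)).le
    rw [hlen] at this
    rw [hN]
    exact_mod_cast this
  have hc : ∀ i, 0 ≤ corner M w i ∧ corner M w i ≤ 1 := by
    intro i
    simp only [corner]
    refine ⟨by positivity, ?_⟩
    rw [div_le_one (by positivity)]
    exact_mod_cast (cIdx_lt M i w).le
  obtain ⟨θ0, h00, h01, e0⟩ := key 0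
  obtain ⟨θ1, h10, h11, e1⟩ := key 1
  have hU1 := hU 1
  have hUn : (0 : ℝ) ≤ (cIdx M 1 (w.take k) : ℝ) := by positivity
  have hc0 := hc 0
  have hc1 := hc 1
  have h' : |gmap a (corner M w) * N - b * N| < 1 := by
    rw [← sub_mul, abs_mul, abs_of_pos hN0]
    rwa [lt_div_iff₀ hN0] at h
  have hA := Int.floor_le (a * N)
  have hA' := Int.lt_floor_add_one (a * N)
  have hB := Int.floor_le (b * N)
  have hB' := Int.lt_floor_add_one (b * N)
  set α : ℝ := (⌊a * N⌋ : ℝ)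
  set β : ℝ := (⌊b * N⌋ : ℝ)
  obtain ⟨ha1, ha2⟩ := abs_le.1 ha
  obtain ⟨hb1, hb2⟩ := abs_lt.1 h'
  have hax : |a * corner M w 1| ≤ R := by
    rw [abs_mul, abs_of_nonneg hc1.1]
    nlinarith [abs_nonneg a]
  obtain ⟨hax1, hax2⟩ := abs_le.1 hax
  have hg : gmap a (corner M w) = corner M w 0 + a * corner M w 1 := rfl
  have hgN1 : gmap a (corner M w) * N ≤ (R + 1) * N :=
    mul_le_mul_of_nonneg_right (by linarith) hN0.le
  have hgN2 : -(R + 1) * N ≤ gmap a (corner M w) * N :=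
    mul_le_mul_of_nonneg_right (by linarith) hN0.le
  have haN1 : a * N ≤ R * N := mul_le_mul_of_nonneg_right ha2 hN0.le
  have haN2 : -R * N ≤ a * N := mul_le_mul_of_nonneg_right ha1 hN0.le
  constructor
  · simp only [parK, Finset.mem_product, Finset.mem_Icc]
    refine ⟨⟨?_, ?_⟩, ?_, ?_⟩
    · rw [Int.le_floor]
      push_cast
      rw [← hN]
      linarith
    · have : α ≤ R * N := by linarith
      have h2 : ((⌊a * N⌋ : ℤ) : ℝ) ≤ ((R * M ^ k : ℕ) : ℤ) := by
        push_cast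
        exact this
      exact_mod_cast h2
    · rw [Int.le_floor]
      push_cast
      rw [← hN]
      linarith
    · have : β ≤ (R + 3) * N := by linarith
      have h2 : ((⌊b * N⌋ : ℤ) : ℝ) ≤ (((R + 3) * M ^ k : ℕ) : ℤ) := by
        push_cast
        exact this
      exact_mod_cast h2
  · simp only [nearT, Finset.mem_filter, mem_wordsLen]
    refine ⟨hw, ?_⟩
    set U0 : ℝ := (cIdx M 0 (w.take k) : ℝ)
    set U1 : ℝ := (cIdx M 1 (w.take k) : ℝ)
    have hd1 : |α / N * U1 - a * U1| ≤ 1 := by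
      have : α / N * U1 - a * U1 = (α - a * N) * (U1 / N) := by field_simp
      rw [this, abs_mul, abs_of_nonneg (div_nonneg hUn hN0.le)]
      have h1 : |α - a * N| ≤ 1 := abs_le.2 ⟨by linarith, by linarith⟩
      have h2 : U1 / N ≤ 1 := (div_le_one hN0).2 hU1
      have h3 : 0 ≤ U1 / N := div_nonneg hUn hN0.le
      nlinarith [abs_nonneg (α - a * N)]
    obtain ⟨hd2, hd3⟩ := abs_le.1 hd1
    have haθ : |a * θ1| ≤ R := by
      rw [abs_mul, abs_of_nonneg h10]
      nlinarith [abs_nonneg a]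
    obtain ⟨hθ1, hθ2⟩ := abs_le.1 haθ
    have e2 : gmap a (corner M w) * N = U0 + θ0 + a * U1 + a * θ1 := by
      rw [hg, add_mul, e0, mul_assoc, e1]
      ring
    rw [e2] at hb1 hb2
    push_cast
    rw [abs_le]
    constructor <;> linarith

lemma isCompact_wordCube (M : ℕ) (w : List (Alpha 2 M)) : IsCompact (wordCube 2 M w) := by
  have h : wordCube 2 M w = (EuclideanSpace.equiv (Fin 2) ℝ).toHomeomorph ⁻¹'
      (Set.pi univ fun i => Icc (wordBase 2 M w i)
        (wordBase 2 M w i + (M : ℝ) ^ (-(w.length : ℤ)))) := by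
    ext x
    simp only [wordCube, mem_ofPred_eq, mem_preimage, mem_univ_pi, mem_Icc]
    rfl
  rw [h, Homeomorph.isCompact_preimage]
  exact isCompact_univ_pi fun i => isCompact_Icc

lemma isCompact_approx (M : ℕ) (ω : PercSpace 2 M) (n : ℕ) : IsCompact (approx 2 M ω n) := by
  unfold approx
  apply Set.Finite.isCompact_biUnion
  · apply (wordsLen M n).finite_toSet.subset
    intro w hw
    simpa using hw.1
  · intro w _
    exact isCompact_wordCube M w

lemma scale_choice (M : ℕ) (hM : 2 ≤ M) (t : ℝ) (ht : 0 < t) (n0 : ℕ) (x : ℝ≥0∞)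
    (hx : x ≤ ENNReal.ofReal ((1 / (M : ℝ)) ^ (n0 + 2))) (e : ℝ≥0∞) (he : 0 < e) :
    ∃ k, n0 ≤ k ∧ x < ENNReal.ofReal (1 / (M : ℝ) ^ k) ∧
      ENNReal.ofReal (1 / ((M : ℝ) ^ t) ^ k) ≤ ENNReal.ofReal (((M : ℝ) ^ t) ^ 2) * x ^ t + e := by
  have hM0 : (0 : ℝ) < M := by positivity
  have hM1 : (1 : ℝ) < M := by exact_mod_cast (by omega : 1 < M)
  set tau : ℝ := (M : ℝ) ^ t with htau
  have htau1 : 1 < tau := Real.one_lt_rpow hM1 ht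
  have htau0 : 0 < tau := by linarith
  have hxt : x ≠ ∞ := (hx.trans_lt ENNReal.ofReal_lt_top).ne
  lift x to NNReal using hxt
  have hi1 : 1 / (M : ℝ) < 1 := by rw [div_lt_one hM0]; exact hM1
  have hi0 : 0 < 1 / (M : ℝ) := by positivity
  rcases eq_or_ne x 0 with h0 | h0
  · have h1 : Filter.Tendsto (fun k : ℕ => ENNReal.ofReal (1 / tau ^ k)) Filter.atTop (nhds 0) := by
      rw [← ENNReal.ofReal_zero]
      apply ENNReal.tendsto_ofReal
      have := tendsto_pow_atTop_nhds_zero_of_lt_one (r := 1 / tau) (by positivity)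
        (by rw [div_lt_one htau0]; exact htau1)
      refine this.congr fun k => ?_
      rw [div_pow, one_pow]
    obtain ⟨k, hk, hkn⟩ := ((h1.eventually (gt_mem_nhds he)).and
      (Filter.eventually_ge_atTop n0)).exists
    refine ⟨k, hkn, ?_, hk.le.trans le_add_self⟩
    rw [h0]
    simp
    positivity
  · have hx0 : (0 : ℝ) < x := by positivity
    have hx2 : (x : ℝ) ≤ (1 / (M : ℝ)) ^ (n0 + 2) := by
      rw [← ENNReal.ofReal_coe_nnreal] at hx
      exact (ENNReal.ofReal_le_ofReal_iff (by positivity)).1 hx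
    have hx1 : (x : ℝ) ≤ 1 := hx2.trans (pow_le_one₀ hi0.le hi1.le)
    obtain ⟨n, hn1, hn2⟩ := exists_nat_pow_near_of_lt_one hx0 hx1 hi0 hi1
    have hnn : n0 + 2 < n + 1 := by
      by_contra hcon
      push Not at hcon
      have := pow_le_pow_of_le_one hi0.le hi1.le hcon
      linarith
    obtain ⟨k, rfl⟩ : ∃ k, n = k + 1 := ⟨n - 1, by omega⟩
    refine ⟨k, by omega, ?_, ?_⟩
    · rw [← ENNReal.ofReal_coe_nnreal]
      apply (ENNReal.ofReal_lt_ofReal_iff (by positivity)).2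
      refine hn2.trans_lt ?_
      rw [← one_div_pow]
      exact pow_lt_pow_right_of_lt_one₀ hi0 hi1 (by omega)
    · refine le_trans ?_ le_self_add
      rw [← ENNReal.ofReal_coe_nnreal, ENNReal.ofReal_rpow_of_pos hx0,
        ← ENNReal.ofReal_mul (by positivity)]
      apply ENNReal.ofReal_le_ofReal
      have h1 : ((1 / (M : ℝ)) ^ (k + 1 + 1)) ^ t ≤ (x : ℝ) ^ t :=
        Real.rpow_le_rpow (by positivity) hn1.le ht.le
      have h2 : ((1 / (M : ℝ)) ^ (k + 1 + 1)) ^ t = 1 / tau ^ (k + 2) := by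
        rw [one_div_pow, one_div, Real.inv_rpow (by positivity), ← Real.rpow_natCast,
          ← Real.rpow_mul hM0.le, mul_comm, Real.rpow_mul hM0.le, ← htau, Real.rpow_natCast, one_div]
      rw [h2] at h1
      calc 1 / tau ^ k = tau ^ 2 * (1 / tau ^ (k + 2)) := by
            rw [pow_add]; field_simp
        _ ≤ _ := by gcongr

lemma cover_lemma (M : ℕ) (hM : 2 ≤ M) (t : ℝ) (ht : 0 < t) (n0 : ℕ) (s : Set ℝ)
    (hs : μH[t] s = 0) :
    ∃ (b : ℕ → ℝ) (k : ℕ → ℕ), (∀ i, n0 ≤ k i) ∧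
      (∀ x ∈ s, ∃ i, |x - b i| < 1 / (M : ℝ) ^ (k i)) ∧
      ∑' i, ENNReal.ofReal (1 / ((M : ℝ) ^ t) ^ (k i)) < ENNReal.ofReal (1 / 2) := by
  have hM0 : (0 : ℝ) < M := by positivity
  set D : ℝ≥0∞ := ENNReal.ofReal (((M : ℝ) ^ t) ^ 2) with hD
  have hD0 : D ≠ 0 := by
    rw [hD, Ne, ENNReal.ofReal_eq_zero, not_le]
    positivity
  have hq : ENNReal.ofReal (1 / 4) ≠ 0 := by
    rw [Ne, ENNReal.ofReal_eq_zero, not_le]; norm_num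
  set δ : ℝ≥0∞ := ENNReal.ofReal ((1 / (M : ℝ)) ^ (n0 + 2)) with hδ
  have hδ0 : 0 < δ := by
    rw [hδ, ENNReal.ofReal_pos]; positivity
  rw [Measure.hausdorffMeasure_apply] at hs
  have h1 := (iSup_le_iff.1 ((iSup_le_iff.1 hs.le) δ)) hδ0
  have h2 : (0 : ℝ≥0∞) < ENNReal.ofReal (1 / 4) / D :=
    ENNReal.div_pos hq ENNReal.ofReal_ne_top
  have h3 := lt_of_le_of_lt h1 h2
  simp only [iInf_lt_iff] at h3
  obtain ⟨T, hT1, hT2, hT3⟩ := h3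
  have h4 : ∀ n, (⨆ (_ : (T n).Nonempty), Metric.ediam (T n) ^ t) = Metric.ediam (T n) ^ t := by
    intro n
    rcases (T n).eq_empty_or_nonempty with h | h
    · rw [h]
      simp [ht]
    · simp [h]
  simp only [h4] at hT3
  obtain ⟨e, he0, he1⟩ := ENNReal.exists_pos_sum_of_countable' hq ℕ
  have h5 := fun i => scale_choice M hM t ht n0 (Metric.ediam (T i)) (hT2 i) (e i) (he0 i)
  choose k hk1 hk2 hk3 using h5
  have h6 : ∀ i, ∃ b : ℝ, (T i).Nonempty → b ∈ T i := by
    intro i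
    rcases (T i).eq_empty_or_nonempty with h | h
    · exact ⟨0, fun h' => by simp [h] at h'⟩
    · exact ⟨h.choose, fun _ => h.choose_spec⟩
  choose b hb using h6
  refine ⟨b, k, hk1, ?_, ?_⟩
  · intro x hx
    obtain ⟨i, hi⟩ := mem_iUnion.1 (hT1 hx)
    refine ⟨i, ?_⟩
    have h7 := (Metric.edist_le_ediam_of_mem hi (hb i ⟨x, hi⟩)).trans_lt (hk2 i)
    rw [edist_dist, Real.dist_eq] at h7
    exact (ENNReal.ofReal_lt_ofReal_iff (by positivity)).1 h7
  · refine (ENNReal.tsum_le_tsum hk3).trans_lt ?_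
    rw [ENNReal.tsum_add, ENNReal.tsum_mul_left]
    have h8 : D * ∑' i, Metric.ediam (T i) ^ t ≤ ENNReal.ofReal (1 / 4) := by
      refine (mul_le_mul_right hT3.le D).trans ?_
      rw [ENNReal.mul_div_cancel hD0 ENNReal.ofReal_ne_top]
    have h9 : ENNReal.ofReal (1 / 2) = ENNReal.ofReal (1 / 4) + ENNReal.ofReal (1 / 4) := by
      rw [← ENNReal.ofReal_add (by norm_num) (by norm_num)]; norm_num
    rw [h9]
    exact ENNReal.add_lt_add_of_le_of_lt (h8.trans_lt ENNReal.ofReal_lt_top).ne h8 he1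

lemma good_dimH (M : ℕ) (hM : 2 ≤ M) (R : ℕ) (lam : ℝ) (hlam : 0 < lam) (t : NNReal) (ht : 0 < t)
    (n0 : ℕ) (ω : PercSpace 2 M)
    (hω : ∀ n, ∃ m, n ≤ m ∧ ω ∈ goodEv M R lam ((M : ℝ) ^ (t : ℝ)) n0 m)
    (a : ℝ) (ha : |a| ≤ R) : (t : ℝ≥0∞) ≤ dimH (gmap a '' percLimit 2 M ω) := by
  by_contra hcon
  push Not at hcon
  have hH := hausdorffMeasure_of_dimH_lt hcon
  obtain ⟨b, k, hk, hcov, hsum⟩ := cover_lemma M hM t (by exact_mod_cast ht) n0 _ hH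
  set tau : ℝ := (M : ℝ) ^ (t : ℝ) with htau
  let U : ℕ → Set (EuclideanSpace ℝ (Fin 2)) := fun i =>
    {x | |gmap a x - b i| < 1 / (M : ℝ) ^ (k i)}
  have hUo : ∀ i, IsOpen (U i) := fun i =>
    isOpen_lt (((continuous_gmap a).sub continuous_const).abs) continuous_const
  have hsub : percLimit 2 M ω ⊆ ⋃ i, U i := by
    intro x hx
    obtain ⟨i, hi⟩ := hcov _ ⟨x, hx, rfl⟩
    exact mem_iUnion.2 ⟨i, hi⟩
  have hlim : (⋂ n : ℕ, approx 2 M ω (n + 1)) ⊆ percLimit 2 M ω := by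
    intro x hx
    simp only [percLimit, mem_iInter, mem_ofPred_eq] at hx ⊢
    intro n hn
    have := hx (n - 1)
    rwa [Nat.sub_add_cancel hn] at this
  obtain ⟨n1, hn1⟩ := exists_subset_nhds_of_isCompact' (V := fun n : ℕ => approx 2 M ω (n + 1))
    (fun x y => ⟨max x y, approx_anti M hM ω (by simp), approx_anti M hM ω (by simp)⟩)
    (fun n => isCompact_approx M ω _) (fun n => (isCompact_approx M ω _).isClosed)
    (U := ⋃ i, U i) (fun x hx => (isOpen_iUnion hUo).mem_nhds (hsub (hlim hx)))
  obtain ⟨F, hF⟩ := (isCompact_approx M ω (n1 + 1)).elim_finite_subcover U hUo hn1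
  obtain ⟨m, hm, hgood⟩ := hω (max (n1 + 1) (F.sup k))
  have hm1 : n1 + 1 ≤ m := (le_max_left _ _).trans hm
  have hm2 : ∀ i ∈ F, k i ≤ m := fun i hi =>
    (Finset.le_sup hi).trans ((le_max_right _ _).trans hm)
  obtain ⟨hg1, hg2⟩ := hgood
  let q : ℕ → ℤ × ℤ := fun i => (⌊a * (M : ℝ) ^ (k i)⌋, ⌊b i * (M : ℝ) ^ (k i)⌋)
  let T : ℕ → Finset (List (Alpha 2 M)) := fun i =>
    if q i ∈ parK M R (k i) then
      nearT M (R + 4) (k i) (((q i).1 : ℝ) / (M : ℝ) ^ (k i)) ((q i).2 : ℝ) m else ∅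
  have hT : ∀ i ∈ F, cnt (T i) ω ≤ ENNReal.ofReal (lam ^ m) * ENNReal.ofReal (1 / tau ^ (k i)) := by
    intro i hi
    rw [← ENNReal.ofReal_mul (by positivity), mul_one_div]
    by_cases hq : q i ∈ parK M R (k i)
    · simp only [T, if_pos hq]
      exact (hg2 (k i) (hk i) (hm2 i hi) (q i) hq).le
    · simp [T, if_neg hq, cnt]
  have hTsub : ∀ i, T i ⊆ wordsLen M m := by
    intro i w hw
    by_cases hq : q i ∈ parK M R (k i)
    · simp only [T, if_pos hq] at hw
      rw [mem_wordsLen]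
      exact near_length w hw
    · simp [T, if_neg hq] at hw
  have hle : cnt (wordsLen M m) ω ≤ ∑ i ∈ F, cnt (T i) ω := by
    have h1 : ∀ i, cnt (T i) ω = ∑ w ∈ wordsLen M m,
        if w ∈ T i then (retSet [w]).indicator (1 : PercSpace 2 M → ℝ≥0∞) ω else 0 := by
      intro i
      rw [cnt, ← Finset.sum_filter, Finset.filter_mem_eq_inter,
        Finset.inter_eq_right.2 (hTsub i)]
    simp only [h1]
    rw [Finset.sum_comm, cnt]
    apply Finset.sum_le_sum
    intro w hw
    by_cases hr : ω ∈ retSet [w]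
    · have hr' : Retained 2 M ω w := hr w (by simp)
      have hl : w.length = m := by simpa using hw
      have hc : corner M w ∈ approx 2 M ω m := by
        simp only [approx, mem_iUnion, mem_ofPred_eq, exists_prop]
        exact ⟨w, ⟨hl, hr'⟩, corner_mem M hM w⟩
      have hc2 := hF (approx_anti M hM ω hm1 hc)
      simp only [mem_iUnion, exists_prop] at hc2
      obtain ⟨i, hi, hu⟩ := hc2
      obtain ⟨hq, hn⟩ := strip_near M hM R a (b i) ha (k i) m (hm2 i hi) w hl hu
      have hwT : w ∈ T i := by
        have hq' : q i ∈ parK M R (k i) := hq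
        simp only [T, if_pos hq']
        exact hn
      refine le_trans ?_ (Finset.single_le_sum (fun _ _ => zero_le) hi)
      rw [if_pos hwT]
    · rw [indicator_of_notMem hr]
      exact zero_le
  have h2 : ENNReal.ofReal (lam ^ m) * ENNReal.ofReal (1 / 2) ≤
      ENNReal.ofReal (lam ^ m) * ∑' i, ENNReal.ofReal (1 / tau ^ (k i)) := by
    rw [← ENNReal.ofReal_mul (by positivity), mul_one_div]
    refine hg1.trans (hle.trans ((Finset.sum_le_sum hT).trans ?_))
    rw [← Finset.mul_sum]
    gcongr
    exact ENNReal.sum_le_tsum F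
  rw [ENNReal.mul_le_mul_iff_right (by rw [Ne, ENNReal.ofReal_eq_zero, not_le]; positivity)
    ENNReal.ofReal_ne_top] at h2
  exact absurd hsum (not_lt.2 h2)

/-- The bad event: some projection has dimension less than `t`. -/
def badEv (M R : ℕ) (t : NNReal) : Set (PercSpace 2 M) :=
  {ω | ∃ a : ℝ, |a| ≤ R ∧ dimH (gmap a '' percLimit 2 M ω) < t}

/-- The extinction event. -/
def extEv (M : ℕ) : Set (PercSpace 2 M) :=
  {ω | ∃ n : ℕ, ∀ w : List (Alpha 2 M), w.length = n → ¬ Retained 2 M ω w}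

/-- The similarity onto a first level cube. -/
def phiMap (M : ℕ) (i : Alpha 2 M) (x : EuclideanSpace ℝ (Fin 2)) : EuclideanSpace ℝ (Fin 2) :=
  WithLp.toLp 2 (fun j => (x j + ((i j : ℕ) : ℝ)) / M)

lemma phi_mem (M : ℕ) (hM : 2 ≤ M) (i : Alpha 2 M) (ω : PercSpace 2 M)
    (hi : ω ⟨[i], by simp⟩ = true) (x : EuclideanSpace ℝ (Fin 2))
    (hx : x ∈ percLimit 2 M (shiftPerc M i ω)) : phiMap M i x ∈ percLimit 2 M ω := by
  have hM0 : (0 : ℝ) < M := by positivity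
  simp only [percLimit, mem_iInter, mem_ofPred_eq] at hx ⊢
  intro n hn
  apply approx_anti M hM ω (Nat.le_succ n)
  have h := hx n hn
  simp only [approx, mem_iUnion, mem_ofPred_eq, exists_prop] at h ⊢
  obtain ⟨w, ⟨hl, hr⟩, hxw⟩ := h
  refine ⟨i :: w, ⟨by simp [hl], retained_cons.2 ⟨hi, hr⟩⟩, ?_⟩
  simp only [wordCube, mem_ofPred_eq] at hxw ⊢
  intro j
  obtain ⟨h1, h2⟩ := hxw j
  rw [wordBase_cons M i w j hM]
  simp only [phiMap]
  have h3 : (M : ℝ) ^ (-((i :: w).length : ℤ)) = (M : ℝ) ^ (-(w.length : ℤ)) / M := by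
    rw [List.length_cons]
    push_cast
    rw [neg_add, zpow_add₀ hM0.ne', div_eq_mul_inv]
    simp
  rw [h3, ← add_div, ← add_div]
  constructor
  · exact div_le_div_of_nonneg_right (by linarith) hM0.le
  · exact div_le_div_of_nonneg_right (by linarith) hM0.le

lemma dimH_shift (M : ℕ) (hM : 2 ≤ M) (i : Alpha 2 M) (ω : PercSpace 2 M)
    (hi : ω ⟨[i], by simp⟩ = true) (a : ℝ) :
    dimH (gmap a '' percLimit 2 M (shiftPerc M i ω)) ≤ dimH (gmap a '' percLimit 2 M ω) := by
  have hM0 : (0 : ℝ) < M := by positivity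
  let h : ℝ → ℝ := fun s => M * s - (((i 0 : ℕ) : ℝ) + a * ((i 1 : ℕ) : ℝ))
  have hl : LipschitzWith (M : NNReal) h := by
    apply LipschitzWith.of_dist_le_mul
    intro x y
    simp only [h, Real.dist_eq]
    rw [sub_sub_sub_cancel_right, ← mul_sub, abs_mul]
    simp
  refine le_trans (dimH_mono ?_) (hl.dimH_image_le (gmap a '' percLimit 2 M ω))
  rintro _ ⟨x, hx, rfl⟩
  refine ⟨gmap a (phiMap M i x), ⟨_, phi_mem M hM i ω hi x hx, rfl⟩, ?_⟩
  simp only [h, gmap, phiMap]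
  field_simp
  ring

lemma bad_sub (M : ℕ) (hM : 2 ≤ M) (R : ℕ) (t : NNReal) :
    badEv M R t ⊆ {ω | ∀ i : Alpha 2 M, ω ⟨[i], by simp⟩ = true → shiftPerc M i ω ∈ badEv M R t} := by
  rintro ω ⟨a, ha, h⟩ i hi
  exact ⟨a, ha, (dimH_shift M hM i ω hi a).trans_lt h⟩

lemma measurableSet_extEv (M : ℕ) : MeasurableSet (extEv M) := by
  have h : extEv M = ⋃ n : ℕ, ⋂ w ∈ wordsLen M n, (retSet [w])ᶜ := by
    ext ω
    simp [extEv, retSet]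
  rw [h]
  exact MeasurableSet.iUnion fun n => Finset.measurableSet_biInter _ fun w _ =>
    (measurableSet_retSet _).compl

lemma ext_limit (M : ℕ) (hM : 2 ≤ M) (ω : PercSpace 2 M) (h : ω ∈ extEv M) :
    percLimit 2 M ω = ∅ := by
  obtain ⟨n, hn⟩ := h
  rw [eq_empty_iff_forall_notMem]
  intro x hx
  simp only [percLimit, mem_iInter, mem_ofPred_eq] at hx
  have h1 := approx_anti M hM ω (Nat.le_succ n) (hx (n + 1) (by omega))
  simp only [approx, mem_iUnion, mem_ofPred_eq, exists_prop] at h1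
  obtain ⟨w, ⟨hl, hr⟩, -⟩ := h1
  exact hn w hl hr

lemma ext_sub_bad (M : ℕ) (hM : 2 ≤ M) (R : ℕ) (t : NNReal) (ht : 0 < t) :
    extEv M ⊆ badEv M R t := by
  intro ω h
  refine ⟨0, by simp, ?_⟩
  rw [ext_limit M hM ω h]
  simpa using ht

lemma ext_closed (M : ℕ) :
    {ω | ∀ i : Alpha 2 M, ω ⟨[i], by simp⟩ = true → shiftPerc M i ω ∈ extEv M} ⊆ extEv M := by
  intro ω h
  have h1 : ∀ i : Alpha 2 M, ∃ n : ℕ, ω ⟨[i], by simp⟩ = true →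
      ∀ w : List (Alpha 2 M), w.length = n → ¬ Retained 2 M (shiftPerc M i ω) w := by
    intro i
    by_cases hi : ω ⟨[i], by simp⟩ = true
    · obtain ⟨n, hn⟩ := h i hi
      exact ⟨n, fun _ => hn⟩
    · exact ⟨0, fun h' => absurd h' hi⟩
  choose n hn using h1
  refine ⟨Finset.univ.sup n + 1, fun w hw hr => ?_⟩
  rcases w with _ | ⟨i, w⟩
  · simp at hw
  · rw [retained_cons] at hr
    have h2 : n i ≤ Finset.univ.sup n := Finset.le_sup (Finset.mem_univ i)
    refine hn i hr.1 (w.take (n i)) ?_ (retained_prefix (List.take_prefix _ _) hr.2)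
    simp at hw
    simp
    omega

lemma convex_fix (p : ℝ) (hp0 : 0 < p) (hp1 : p ≤ 1) (N : ℕ) (hN : 2 ≤ N) (η q : ℝ)
    (hη0 : 0 ≤ η) (hq1 : q < 1) (hq : q ≤ (1 - p + p * q) ^ N) (hη : (1 - p + p * η) ^ N ≤ η) :
    q ≤ η := by
  by_contra hcon
  push Not at hcon
  set s : ℝ := (1 - q) / (1 - η) with hs
  have h1η : 0 < 1 - η := by linarith
  have hs0 : 0 < s := div_pos (by linarith) h1η
  have hs1 : s < 1 := by rw [hs, div_lt_one h1η]; linarith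
  have hsq : s * η + (1 - s) = q := by
    rw [hs]; field_simp; ring
  have h := (strictConvexOn_pow hN).2 (x := 1 - p + p * η) (y := 1)
    (by simp only [mem_Ici]; nlinarith) (by simp) (by intro h; nlinarith) hs0
    (by linarith : 0 < 1 - s) (by ring)
  simp only [smul_eq_mul, one_pow, mul_one] at h
  have h2 : s * (1 - p + p * η) + (1 - s) = 1 - p + p * q := by
    rw [← hsq]; ring
  rw [h2] at h
  have h3 : s * (1 - p + p * η) ^ N ≤ s * η := mul_le_mul_of_nonneg_left hη hs0.le
  linarith

lemma bad_diff_zero (M : ℕ) (hM : 2 ≤ M) (p : ℝ) (hp0 : 0 < p) (hp1 : p ≤ 1)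
    {P : Measure (PercSpace 2 M)} (hP : IsBernoulliPerc 2 M p P) (t : NNReal) (ht : 0 < t)
    (htM : (M : ℝ) ^ (t : ℝ) < M) (htl : (M : ℝ) ^ (t : ℝ) < (M : ℝ) ^ 2 * p) (R : ℕ) :
    P (badEv M R t \ extEv M) = 0 := by
  have := hP.1
  have hM0 : (0 : ℝ) < M := by positivity
  have hM1 : (1 : ℝ) < M := by exact_mod_cast (by omega : 1 < M)
  have htau1 : 1 < (M : ℝ) ^ (t : ℝ) := Real.one_lt_rpow hM1 (by exact_mod_cast ht)
  obtain ⟨n0, -, c, hc, hgood⟩ := good_prob M hM p hp0 hp1 hP _ rfl _ htau1 htM htl R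
  have hlim := limsup_prob P _ (fun m => measurableSet_goodEv M R _ _ n0 m) _ hgood
  set L : Set (PercSpace 2 M) := {ω | ∀ n, ∃ m, n ≤ m ∧ ω ∈ goodEv M R ((M : ℝ) ^ 2 * p)
    ((M : ℝ) ^ (t : ℝ)) n0 m} with hL
  have hLm : MeasurableSet L := by
    have h1 : L = ⋂ n : ℕ, ⋃ m, ⋃ (_ : n ≤ m), goodEv M R ((M : ℝ) ^ 2 * p)
        ((M : ℝ) ^ (t : ℝ)) n0 m := by
      ext ω
      simp [hL]
    rw [h1]
    exact MeasurableSet.iInter fun n => MeasurableSet.iUnion fun m => MeasurableSet.iUnion fun _ =>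
      measurableSet_goodEv M R _ _ n0 m
  have hbadL : badEv M R t ⊆ Lᶜ := by
    rintro ω ⟨a, ha, h⟩ hω
    exact absurd h (not_lt.2 (good_dimH M hM R _ (by positivity) t ht n0 ω hω a ha))
  have hq1 : P (badEv M R t) < 1 := by
    refine (measure_mono hbadL).trans_lt ?_
    rw [prob_compl_eq_one_sub hLm]
    apply ENNReal.sub_lt_self ENNReal.one_ne_top one_ne_zero
    intro h0
    rw [h0] at hlim
    have := ENNReal.ofReal_pos.2 hc
    exact absurd hlim (not_le.2 this)
  have hself : P (badEv M R t) ≤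
      (ENNReal.ofReal (1 - p) + ENNReal.ofReal p * P (badEv M R t)) ^ (M ^ 2) := by
    rw [← measure_toMeasurable (badEv M R t), ← perc_selfsimilar M p hp0 hp1 P hP _
      (measurableSet_toMeasurable P _), measure_toMeasurable]
    apply measure_mono
    intro ω hω i hi
    exact subset_toMeasurable P _ (bad_sub M hM R t hω i hi)
  have hext : (ENNReal.ofReal (1 - p) + ENNReal.ofReal p * P (extEv M)) ^ (M ^ 2) ≤ P (extEv M) := by
    rw [← perc_selfsimilar M p hp0 hp1 P hP _ (measurableSet_extEv M)]
    exact measure_mono (ext_closed M)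
  have conv : ∀ A : Set (PercSpace 2 M),
      (ENNReal.ofReal (1 - p) + ENNReal.ofReal p * P A) ^ (M ^ 2)
        = ENNReal.ofReal ((1 - p + p * P.real A) ^ (M ^ 2)) := by
    intro A
    have h1 : P A = ENNReal.ofReal (P.real A) := by simp [Measure.real]
    have h0 : 0 ≤ P.real A := measureReal_nonneg
    have hp1' : 0 ≤ 1 - p := by linarith
    rw [h1, ← ENNReal.ofReal_mul hp0.le, ← ENNReal.ofReal_add hp1' (by positivity),
      ENNReal.ofReal_pow (by positivity)]
  have hP' : ∀ A : Set (PercSpace 2 M), P A = ENNReal.ofReal (P.real A) := fun A => by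
    simp [Measure.real]
  have hp1' : 0 ≤ 1 - p := by linarith
  have hf0 : ∀ A : Set (PercSpace 2 M), 0 ≤ (1 - p + p * P.real A) ^ (M ^ 2) := by
    intro A
    have h0 : 0 ≤ P.real A := measureReal_nonneg
    positivity
  rw [conv, hP' (badEv M R t), ENNReal.ofReal_le_ofReal_iff (hf0 _)] at hself
  rw [conv, hP' (extEv M), ENNReal.ofReal_le_ofReal_iff measureReal_nonneg] at hext
  have hfin := convex_fix p hp0 hp1 (M ^ 2) (by nlinarith) (P.real (extEv M))
    (P.real (badEv M R t)) measureReal_nonneg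
    (by rw [hP' (badEv M R t), ENNReal.ofReal_lt_one] at hq1; exact hq1) hself hext
  rw [measure_diff (ext_sub_bad M hM R t ht) (measurableSet_extEv M).nullMeasurableSet
    (measure_ne_top _ _), hP' (badEv M R t), hP' (extEv M)]
  exact tsub_eq_zero_of_le (ENNReal.ofReal_le_ofReal hfin)

lemma ediam_wordCube (M : ℕ) (w : List (Alpha 2 M)) :
    Metric.ediam (wordCube 2 M w) ≤ ENNReal.ofReal (2 * (1 / (M : ℝ) ^ w.length)) := by
  apply Metric.ediam_le
  intro x hx y hy
  rw [edist_dist]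
  apply ENNReal.ofReal_le_ofReal
  simp only [wordCube, mem_ofPred_eq, zpow_neg, zpow_natCast] at hx hy
  have h : ∀ i, |x i - y i| ≤ 1 / (M : ℝ) ^ w.length := by
    intro i
    have h1 := hx i
    have h2 := hy i
    rw [one_div, abs_le]
    constructor <;> linarith
  have h0 := h 0
  have h1 := h 1
  rw [EuclideanSpace.dist_eq, Fin.sum_univ_two, Real.dist_eq, Real.dist_eq, Real.sqrt_le_iff]
  have ha := abs_nonneg (x 0 - y 0)
  have hb := abs_nonneg (x 1 - y 1)
  constructor
  · positivity
  · nlinarith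

lemma cnt_eq_card {M : ℕ} (T : Finset (List (Alpha 2 M))) (ω : PercSpace 2 M)
    (S : Finset (List (Alpha 2 M))) (hS : ∀ w, w ∈ S ↔ w ∈ T ∧ Retained 2 M ω w) :
    cnt T ω = S.card := by
  have h1 : S ⊆ T := fun w hw => ((hS w).1 hw).1
  rw [cnt, ← Finset.sum_subset h1, Finset.card_eq_sum_ones, Nat.cast_sum]
  · apply Finset.sum_congr rfl
    intro w hw
    rw [indicator_of_mem]
    · simp
    · intro u hu
      rw [List.mem_singleton] at hu
      rw [hu]
      exact ((hS w).1 hw).2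
  · intro w hw hn
    rw [indicator_of_notMem]
    intro h
    exact hn ((hS w).2 ⟨hw, h w (by simp)⟩)

lemma upper_dim (M : ℕ) (hM : 2 ≤ M) (p : ℝ) (hp0 : 0 < p)
    {P : Measure (PercSpace 2 M)} (hP : IsBernoulliPerc 2 M p P) (t : NNReal)
    (htl : (M : ℝ) ^ 2 * p < (M : ℝ) ^ (t : ℝ)) :
    ∀ᵐ ω ∂P, dimH (percLimit 2 M ω) ≤ t := by
  classical
  have hM0 : (0 : ℝ) < M := by positivity
  have hM1 : (1 : ℝ) < M := by exact_mod_cast (by omega : 1 < M)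
  set tau : ℝ := (M : ℝ) ^ (t : ℝ) with htau
  have htau0 : 0 < tau := by positivity
  have hmeas : ∀ n : ℕ, Measurable (fun ω => cnt (wordsLen M n) ω * ENNReal.ofReal (1 / tau) ^ n) :=
    fun n => (measurable_cnt _).mul_const _
  have hIntg : ∫⁻ ω, ∑' n : ℕ, cnt (wordsLen M n) ω * ENNReal.ofReal (1 / tau) ^ n ∂P ≠ ∞ := by
    rw [lintegral_tsum (fun n => (hmeas n).aemeasurable)]
    have h1 : ∀ n : ℕ, ∫⁻ ω, cnt (wordsLen M n) ω * ENNReal.ofReal (1 / tau) ^ n ∂P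
        = (ENNReal.ofReal ((M : ℝ) ^ 2 * p * (1 / tau))) ^ n := by
      intro n
      rw [lintegral_mul_const _ (measurable_cnt _), mean_cnt hP, ← mul_pow,
        ENNReal.ofReal_mul (by positivity), ENNReal.ofReal_mul (by positivity),
        ENNReal.ofReal_pow (by positivity), ENNReal.ofReal_natCast]
    simp only [h1]
    rw [ENNReal.tsum_geometric]
    apply ENNReal.inv_ne_top.2
    rw [Ne, tsub_eq_zero_iff_le, not_le, ENNReal.ofReal_lt_one, mul_one_div, div_lt_one htau0]
    exact htl
  filter_upwards [ae_lt_top (Measurable.tsum hmeas) hIntg] with ω hω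
  have htend := ENNReal.tendsto_atTop_zero_of_tsum_ne_top hω.ne
  apply dimH_le_of_hausdorffMeasure_ne_top
  let S : ℕ → Finset (List (Alpha 2 M)) := fun n =>
    (wordsLen M n).filter (fun w => Retained 2 M ω w)
  have hS : ∀ n w, w ∈ S n ↔ w ∈ wordsLen M n ∧ Retained 2 M ω w := by
    intro n w
    simp [S]
  have hr : Filter.Tendsto (fun n : ℕ => ENNReal.ofReal (2 * (1 / (M : ℝ) ^ n))) Filter.atTop
      (nhds 0) := by
    rw [← ENNReal.ofReal_zero]
    apply ENNReal.tendsto_ofReal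
    have h1 := tendsto_pow_atTop_nhds_zero_of_lt_one (r := 1 / (M : ℝ)) (by positivity)
        (by rw [div_lt_one hM0]; exact hM1)
    have h2 := h1.const_mul 2
    rw [mul_zero] at h2
    refine h2.congr fun k => ?_
    rw [one_div_pow]
  have hlen : ∀ n (w : {w // w ∈ S n}), w.1.length = n := by
    intro n w
    have := ((hS n _).1 w.2).1
    simpa using this
  have hmain := Measure.hausdorffMeasure_le_liminf_sum (ι := fun n => {w // w ∈ S n}) (t : ℝ)
    (percLimit 2 M ω) (l := Filter.atTop) _ hr (fun n w => wordCube 2 M w.1)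
    (Filter.Eventually.of_forall fun n w => by
      have := ediam_wordCube M w.1
      rwa [hlen n w] at this)
    (by
      filter_upwards [Filter.eventually_ge_atTop 1] with n hn x hx
      simp only [percLimit, mem_iInter, mem_ofPred_eq] at hx
      have h := hx n hn
      simp only [approx, mem_iUnion, mem_ofPred_eq, exists_prop] at h
      obtain ⟨w, ⟨hl, hr⟩, hxw⟩ := h
      exact mem_iUnion.2 ⟨⟨w, (hS n w).2 ⟨by simpa using hl, hr⟩⟩, hxw⟩)
  have hbound : ∀ n : ℕ, ∑ w : {w // w ∈ S n}, Metric.ediam (wordCube 2 M w.1) ^ (t : ℝ) ≤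
      ENNReal.ofReal (2 ^ (t : ℝ)) * (cnt (wordsLen M n) ω * ENNReal.ofReal (1 / tau) ^ n) := by
    intro n
    have h1 : ∀ w : {w // w ∈ S n}, Metric.ediam (wordCube 2 M w.1) ^ (t : ℝ) ≤
        ENNReal.ofReal (2 ^ (t : ℝ)) * ENNReal.ofReal (1 / tau) ^ n := by
      intro w
      have h2 := ediam_wordCube M w.1
      rw [hlen n w] at h2
      refine (ENNReal.rpow_le_rpow h2 (NNReal.coe_nonneg t)).trans (le_of_eq ?_)
      rw [ENNReal.ofReal_rpow_of_pos (by positivity), ← ENNReal.ofReal_pow (by positivity),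
        ← ENNReal.ofReal_mul (by positivity)]
      congr 1
      rw [Real.mul_rpow (by positivity) (by positivity), one_div, Real.inv_rpow (by positivity),
        ← Real.rpow_natCast, ← Real.rpow_mul hM0.le, mul_comm (n : ℝ), Real.rpow_mul hM0.le,
        ← htau, Real.rpow_natCast, one_div, inv_pow]
    refine (Finset.sum_le_sum fun w _ => h1 w).trans (le_of_eq ?_)
    rw [Finset.sum_const, nsmul_eq_mul, cnt_eq_card _ _ _ (hS n), Finset.card_univ,
      Fintype.card_coe]
    ring
  have ht0 : Filter.Tendsto (fun n : ℕ => ENNReal.ofReal (2 ^ (t : ℝ)) *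
      (cnt (wordsLen M n) ω * ENNReal.ofReal (1 / tau) ^ n)) Filter.atTop (nhds 0) := by
    have := ENNReal.Tendsto.const_mul htend (Or.inr ENNReal.ofReal_ne_top)
      (a := ENNReal.ofReal (2 ^ (t : ℝ)))
    rwa [mul_zero] at this
  have hz := tendsto_of_tendsto_of_tendsto_of_le_of_le tendsto_const_nhds ht0
    (fun n => zero_le) hbound
  rw [hz.liminf_eq] at hmain
  exact (hmain.trans_lt ENNReal.zero_lt_top).ne

lemma contDiff_lineProj (z v : EuclideanSpace ℝ (Fin 2)) : ContDiff ℝ 1 (lineProj z v) := by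
  unfold lineProj
  exact contDiff_const.add ((((contDiff_id.sub contDiff_const).inner ℝ contDiff_const).div_const
    _).smul contDiff_const)

lemma lineProj_dim_le (z v : EuclideanSpace ℝ (Fin 2)) (E : Set (EuclideanSpace ℝ (Fin 2))) :
    dimH (lineProj z v '' E) ≤ min 1 (dimH E) := by
  apply le_min
  · have h : ContDiff ℝ 1 (fun s : ℝ => z + s • v) := by fun_prop
    have h1 := h.dimH_range_le
    simp only [Module.finrank_self, Nat.cast_one] at h1
    refine (dimH_mono ?_).trans h1
    rintro _ ⟨x, _, rfl⟩
    exact ⟨_, rfl⟩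
  · exact (contDiff_lineProj z v).contDiffOn.dimH_image_le convex_univ (subset_univ E)

lemma le_lineProj_dim (z v : EuclideanSpace ℝ (Fin 2)) (hv : v 0 ≠ 0)
    (E : Set (EuclideanSpace ℝ (Fin 2))) :
    dimH (gmap (v 1 / v 0) '' E) ≤ dimH (lineProj z v '' E) := by
  have h : ContDiff ℝ 1 (fun y : EuclideanSpace ℝ (Fin 2) => (@inner ℝ _ _ y v) / v 0) :=
    (contDiff_id.inner ℝ contDiff_const).div_const _
  refine (dimH_mono ?_).trans
    (h.contDiffOn.dimH_image_le convex_univ (subset_univ (lineProj z v '' E)))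
  rintro _ ⟨x, hx, rfl⟩
  refine ⟨_, ⟨x, hx, rfl⟩, ?_⟩
  have hvv : (@inner ℝ _ _ v v) ≠ (0 : ℝ) := by
    rw [Ne, inner_self_eq_zero]
    rintro rfl
    simp at hv
  simp only [lineProj, inner_add_left, real_inner_smul_left]
  rw [div_mul_cancel₀ _ hvv, inner_sub_left]
  simp only [PiLp.inner_apply, Fin.sum_univ_two, gmap, RCLike.inner_apply, conj_trivial]
  field_simp
  ring

lemma main_ae (M : ℕ) (hM : 2 ≤ M) (p : ℝ) (hp0 : 0 < p) (hp1 : p ≤ 1)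
    (P : Measure (PercSpace 2 M)) (hP : IsBernoulliPerc 2 M p P) :
    ∀ᵐ ω ∂P, ω ∈ (extEv M)ᶜ → ∀ z v : EuclideanSpace ℝ (Fin 2), v 0 ≠ 0 → v 1 ≠ 0 →
        dimH (lineProj z v '' percLimit 2 M ω) = min 1 (dimH (percLimit 2 M ω)) := by
  have hM0 : (0 : ℝ) < M := by positivity
  have hM1 : (1 : ℝ) < M := by exact_mod_cast (by omega : 1 < M)
  have hup : ∀ᵐ ω ∂P, ∀ q : ℚ, (M : ℝ) ^ 2 * p < (M : ℝ) ^ ((Real.toNNReal q : NNReal) : ℝ) →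
      dimH (percLimit 2 M ω) ≤ (Real.toNNReal q : NNReal) := by
    rw [ae_all_iff]
    intro q
    by_cases h : (M : ℝ) ^ 2 * p < (M : ℝ) ^ ((Real.toNNReal q : NNReal) : ℝ)
    · filter_upwards [upper_dim M hM p hp0 hP _ h] with ω hω _ using hω
    · exact Filter.Eventually.of_forall fun ω h' => absurd h' h
  have hlo : ∀ᵐ ω ∂P, ∀ (q : ℚ) (R : ℕ), 0 < Real.toNNReal q →
      (M : ℝ) ^ ((Real.toNNReal q : NNReal) : ℝ) < M →
      (M : ℝ) ^ ((Real.toNNReal q : NNReal) : ℝ) < (M : ℝ) ^ 2 * p →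
      ω ∉ badEv M R (Real.toNNReal q) \ extEv M := by
    rw [ae_all_iff]
    intro q
    rw [ae_all_iff]
    intro R
    by_cases h : 0 < Real.toNNReal q ∧ (M : ℝ) ^ ((Real.toNNReal q : NNReal) : ℝ) < M ∧
      (M : ℝ) ^ ((Real.toNNReal q : NNReal) : ℝ) < (M : ℝ) ^ 2 * p
    · have h0 := bad_diff_zero M hM p hp0 hp1 hP _ h.1 h.2.1 h.2.2 R
      filter_upwards [measure_eq_zero_iff_ae_notMem.1 h0] with ω hω _ _ _ using hω
    · exact Filter.Eventually.of_forall fun ω h1 h2 h3 => absurd ⟨h1, h2, h3⟩ h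
  filter_upwards [hup, hlo] with ω h1 h2 hext z v hv _
  apply le_antisymm (lineProj_dim_le z v _)
  refine le_trans ?_ (le_lineProj_dim z v hv _)
  obtain ⟨R, hR⟩ := exists_nat_ge |v 1 / v 0|
  apply le_of_forall_lt
  intro c hc
  obtain ⟨q, hq0, hcq, hq⟩ := ENNReal.lt_iff_exists_rat_btwn.1 hc
  refine hcq.trans_le ?_
  have htpos : 0 < Real.toNNReal q := by
    have := (zero_le (a := c)).trans_lt hcq
    exact_mod_cast this
  obtain ⟨q', hq0', hqq, hq'⟩ := ENNReal.lt_iff_exists_rat_btwn.1 hq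
  have hlt : Real.toNNReal q < Real.toNNReal q' := by exact_mod_cast hqq
  have hq1 : Real.toNNReal q < 1 := by
    have := hq.trans_le (min_le_left _ _)
    exact_mod_cast this
  have hA : (M : ℝ) ^ ((Real.toNNReal q : NNReal) : ℝ) < M := by
    calc (M : ℝ) ^ ((Real.toNNReal q : NNReal) : ℝ) < (M : ℝ) ^ (1 : ℝ) :=
          Real.rpow_lt_rpow_of_exponent_lt hM1 (by exact_mod_cast hq1)
      _ = M := Real.rpow_one _
  have hB : (M : ℝ) ^ ((Real.toNNReal q : NNReal) : ℝ) < (M : ℝ) ^ 2 * p := by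
    by_contra hcon
    push Not at hcon
    have h3 : (M : ℝ) ^ ((Real.toNNReal q : NNReal) : ℝ) <
        (M : ℝ) ^ ((Real.toNNReal q' : NNReal) : ℝ) :=
      Real.rpow_lt_rpow_of_exponent_lt hM1 (by exact_mod_cast hlt)
    have h4 := h1 q' (hcon.trans_lt h3)
    exact absurd (hq'.trans_le (min_le_right _ _)) (not_lt.2 h4)
  have h5 := h2 q R htpos hA hB
  by_contra hcon
  push Not at hcon
  exact h5 ⟨⟨_, hR, hcon⟩, hext⟩

/-- conditioned on `E ≠ ∅`, almost surely for all lines `ℓ` that are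
not parallel to the coordinate axes, `dim_H (proj_ℓ E) = min 1 (dim_H E)`. -/
theorem projection_dimension_all_oblique_lines
    (M : ℕ) (hM : 2 ≤ M) (p : ℝ) (hp0 : 0 < p) (hp1 : p ≤ 1)
    (P : Measure (PercSpace 2 M)) (hP : IsBernoulliPerc 2 M p P) :
    ∀ᵐ ω ∂(ProbabilityTheory.cond P {ω | percLimit 2 M ω ≠ ∅}),
      ∀ z v : EuclideanSpace ℝ (Fin 2), v 0 ≠ 0 → v 1 ≠ 0 →
        dimH (lineProj z v '' percLimit 2 M ω) = min 1 (dimH (percLimit 2 M ω)) := by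
  have h := main_ae M hM p hp0 hp1 P hP
  rw [← ae_restrict_iff' (measurableSet_extEv M).compl] at h
  have hsub : {ω : PercSpace 2 M | percLimit 2 M ω ≠ ∅} ⊆ (extEv M)ᶜ :=
    fun ω hω he => hω (ext_limit M hM ω he)
  exact Measure.ae_smul_measure (ae_mono (Measure.restrict_mono hsub le_rfl) h) _
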